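/- arXiv:1809.10997 — 2 statements merged into one kernel-verified Lean document; each statement's English description precedes it below -/
import Mathlib

section
/- Let K be a number field, let α_1,…,α_m ∈ Z_K be pairwise distinct nonzero algebraic integers, and let λ_0,λ_1,…,λ_m ∈ Z_K with at least one λ_j ≠ 0. Then there exist infinitely many non-Archimedean places v of K such that Λ_v = λ_0 + λ_1 F_v(α_1) + … + λ_m F_v(α_m) ≠ 0. -/
open NumberField IsDedekindDomain Nat Finset

/-- Euler's factorial series `F_v(α) = ∑ₙ n! αⁿ`, summed in the `v`-adic completion
of the number field `K`. -/
noncomputable def eulerF (K : Type*) [Field K] [NumberField K]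
    (v : HeightOneSpectrum (𝓞 K)) (α : 𝓞 K) : v.adicCompletion K :=
  ∑' n : ℕ, ((n ! : ℕ) : v.adicCompletion K) *
    (algebraMap K (v.adicCompletion K) (α : K)) ^ n

/-!
Put `W = ∏ⱼ (X - αⱼ)`, write `Λ⁽ⁿ⁾` for the linear form with Euler's series cut off after `n`
terms, and let `Φ` be the linear functional on polynomials with `Φ (Xⁿ) = Λ⁽ⁿ⁾ / n!`. The recurrence
between consecutive `Λ⁽ⁿ⁾` says that `Φ` is invariant under `T f = X (X f)'` on the multiples of
`W`, so that `Φ (Wˡ Xᵉ) = Φ (Tˡ (Wˡ Xᵉ))`.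

If `Λ_v = 0`, then `Λ⁽ⁿ⁾` is minus the tail of a series in `n!`, so the moments of `Φ` are
`v`-integral; as `Tˡ` produces coefficients divisible by `l!`, the number `Φ (Wˡ Xᵉ) / l!` is
`v`-integral. Each of the finitely many other places costs at most a power of a prime, so if there
were only finitely many of them, some `x = Φ (Wˡ Xᵉ) B ^ ((m + 1) l + e) / l!`, with `B` independent
of `l` and `e`, would be an algebraic integer. At the Archimedean places `Φ (Wˡ Xᵉ)` grows only
geometrically in `l`, so for large `l` all conjugates of `x` are smaller than `1` and `x = 0`. But
since `W` is separable and prime to `X`, the invariance of `Φ` shows that `Φ (Wˡ Xᵉ)` cannot vanish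
for all `e ≤ m` unless `Φ = 0`, i.e. unless every coefficient of the linear form is zero.
-/

open Polynomial Filter Topology

section EulerOperator

theorem linearMap_eq_zero_of_forall_exists_degree_eq {F M : Type*} [Field F]
    [AddCommMonoid M] [Module F M] {Ψ : F[X] →ₗ[F] M}
    (h : ∀ n : ℕ, ∃ f : F[X], f.degree = n ∧ Ψ f = 0) : Ψ = 0 := by
  choose f hdeg hf using h
  let S : Polynomial.Sequence F := ⟨f, hdeg⟩
  refine (S.basis fun i => (leadingCoeff_ne_zero.mpr (S.ne_zero i)).isUnit).ext fun i => ?_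
  rw [S.basis_eq_self, LinearMap.zero_apply]
  exact hf i

/-- The operator `f ↦ X (X f)'`, i.e. `Xⁿ ↦ (n + 1) Xⁿ⁺¹`; Euler's series `F = ∑ n! Xⁿ` is the
formal solution of `F = 1 + X (X F)'`. -/
noncomputable def eulerOp (R : Type*) [CommSemiring R] : R[X] →ₗ[R] R[X] :=
  LinearMap.mulLeft R X ∘ₗ derivative ∘ₗ LinearMap.mulLeft R X

/-- `Φ` is invariant under `eulerOp` on the ideal generated by `W`. -/
def IsEulerInvariant {R : Type*} [CommSemiring R] (Φ : R[X] →ₗ[R] R) (W : R[X]) : Prop :=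
  ∀ g, Φ (eulerOp R (W * g)) = Φ (W * g)

section CommSemiring

variable {R : Type*} [CommSemiring R]

theorem eulerOp_apply (f : R[X]) : eulerOp R f = X * derivative (X * f) := rfl

theorem eulerOp_monomial (n : ℕ) (c : R) :
    eulerOp R (monomial n c) = monomial (n + 1) (c * (n + 1)) := by
  rw [eulerOp_apply, X_mul_monomial, derivative_monomial_succ, X_mul_monomial]

theorem eulerOp_pow_monomial (l n : ℕ) (c : R) :
    (eulerOp R ^ l) (monomial n c) = monomial (n + l) (c * ((n + 1).ascFactorial l : ℕ)) := by
  induction l with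
  | zero => simp
  | succ l ih =>
    rw [_root_.pow_succ', Module.End.mul_apply, ih, eulerOp_monomial,
      Nat.ascFactorial_succ, ← add_assoc]
    congr 1
    push_cast
    ring

theorem eulerOp_mul (f g : R[X]) :
    eulerOp R (f * g) = X ^ 2 * derivative f * g + f * eulerOp R g := by
  simp only [eulerOp_apply, derivative_mul, derivative_X]
  ring

theorem eulerOp_pow_succ_mul (W g : R[X]) (l : ℕ) :
    eulerOp R (W ^ (l + 1) * g) =
      (l + 1 : R) • (W ^ l * (X ^ 2 * derivative W * g)) + W ^ (l + 1) * eulerOp R g := by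
  rw [eulerOp_mul, derivative_pow_succ, smul_eq_C_mul]
  ring

theorem pow_dvd_eulerOp_pow_succ_mul (W g : R[X]) (l : ℕ) :
    W ^ l ∣ eulerOp R (W ^ (l + 1) * g) := by
  rw [eulerOp_pow_succ_mul]
  exact dvd_add (dvd_smul_of_dvd _ (dvd_mul_right _ _)) ((pow_dvd_pow W l.le_succ).mul_right _)

theorem IsEulerInvariant.apply_eulerOp_pow_succ_mul {Φ : R[X] →ₗ[R] R} {W : R[X]}
    (hΦ : IsEulerInvariant Φ W) (l : ℕ) (g : R[X]) :
    Φ (eulerOp R (W ^ (l + 1) * g)) = Φ (W ^ (l + 1) * g) := by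
  rw [_root_.pow_succ', mul_assoc, hΦ]

theorem IsEulerInvariant.apply_eulerOp_pow {Φ : R[X] →ₗ[R] R} {W : R[X]}
    (hΦ : IsEulerInvariant Φ W) (l : ℕ) (g : R[X]) :
    Φ ((eulerOp R ^ l) (W ^ l * g)) = Φ (W ^ l * g) := by
  induction l generalizing g with
  | zero => simp
  | succ l ih =>
    obtain ⟨h, hh⟩ := pow_dvd_eulerOp_pow_succ_mul W g l
    calc Φ ((eulerOp R ^ (l + 1)) (W ^ (l + 1) * g))
        = Φ ((eulerOp R ^ l) (W ^ l * h)) := by rw [pow_succ, Module.End.mul_apply, hh]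
      _ = Φ (eulerOp R (W ^ (l + 1) * g)) := by rw [ih, hh]
      _ = Φ (W ^ (l + 1) * g) := hΦ.apply_eulerOp_pow_succ_mul l g

end CommSemiring

section IsDomain

variable {R : Type*} [CommRing R] [IsDomain R] [CharZero R]

theorem degree_eulerOp {f : R[X]} (hf : f ≠ 0) : (eulerOp R f).degree = f.degree + 1 := by
  have hXf : (X * f).natDegree = f.natDegree + 1 := natDegree_X_mul hf
  rw [eulerOp_apply, degree_mul, degree_X, degree_derivative (by omega), hXf,
    Nat.add_sub_cancel, degree_eq_natDegree hf, add_comm]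

theorem degree_eulerOp_sub_self {f : R[X]} (hf : f ≠ 0) :
    (eulerOp R f - f).degree = f.degree + 1 := by
  rw [degree_sub_eq_left_of_degree_lt, degree_eulerOp hf]
  rw [degree_eulerOp hf, degree_eq_natDegree hf]
  exact_mod_cast f.natDegree.lt_succ_self

end IsDomain

section Field

variable {κ : Type*} [Field κ] [CharZero κ] {Φ : κ[X] →ₗ[κ] κ} {W : κ[X]}

-- For each `k`, `eulerOp (W ^ (l + 1) * X ^ k) - W ^ (l + 1) * X ^ k` lies in the kernel of `Φ`
-- and is `W ^ l` times a polynomial of degree exactly `natDegree W + k + 1`.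
theorem IsEulerInvariant.apply_pow_mul_eq_zero (hΦ : IsEulerInvariant Φ W) (hW : W ≠ 0) {l : ℕ}
    (h : ∀ e ≤ W.natDegree, Φ (W ^ l * X ^ e) = 0) (g : κ[X]) : Φ (W ^ l * g) = 0 := by
  suffices hΨ : Φ ∘ₗ LinearMap.mulLeft κ (W ^ l) = 0 from LinearMap.congr_fun hΨ g
  refine linearMap_eq_zero_of_forall_exists_degree_eq fun n => ?_
  rcases le_or_gt n W.natDegree with hn | hn
  · exact ⟨X ^ n, degree_X_pow n, h n hn⟩
  obtain ⟨k, rfl⟩ := Nat.exists_eq_add_of_lt hn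
  obtain ⟨f, hf⟩ : W ^ l ∣ eulerOp κ (W ^ (l + 1) * X ^ k) - W ^ (l + 1) * X ^ k :=
    dvd_sub (pow_dvd_eulerOp_pow_succ_mul W _ l) ((pow_dvd_pow W l.le_succ).mul_right _)
  refine ⟨f, ?_, ?_⟩
  · have hdeg := congrArg degree hf
    rw [degree_eulerOp_sub_self (by simp [hW]), pow_succ, mul_assoc, degree_mul, degree_mul,
      degree_mul, degree_X_pow, add_assoc] at hdeg
    rw [← (WithBot.add_left_inj (degree_ne_bot.mpr (pow_ne_zero l hW))).mp hdeg,
      degree_eq_natDegree hW]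
    rfl
  · change Φ (W ^ l * f) = 0
    rw [← hf, map_sub, sub_eq_zero, hΦ.apply_eulerOp_pow_succ_mul]

theorem IsEulerInvariant.apply_pow_mul_eq_zero_of_succ (hΦ : IsEulerInvariant Φ W)
    (hsep : W.Separable) (hX : IsCoprime W X) {l : ℕ} (h : ∀ g, Φ (W ^ (l + 1) * g) = 0)
    (g : κ[X]) : Φ (W ^ l * g) = 0 := by
  have hderiv (g : κ[X]) : Φ (W ^ l * (X ^ 2 * derivative W * g)) = 0 := by
    have hinv := hΦ.apply_eulerOp_pow_succ_mul l g
    rw [eulerOp_pow_succ_mul, map_add, map_smul, h, h, add_zero, smul_eq_mul] at hinv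
    exact (mul_eq_zero.mp hinv).resolve_left (Nat.cast_add_one_ne_zero l)
  obtain ⟨A, B, hAB⟩ : IsCoprime W (X ^ 2 * derivative W) := hX.pow_right.mul_right hsep
  have hsplit : W ^ l * g = W ^ (l + 1) * (A * g) + W ^ l * (X ^ 2 * derivative W * (B * g)) := by
    linear_combination -(W ^ l * g) * hAB
  rw [hsplit, map_add, h, hderiv, add_zero]

theorem IsEulerInvariant.eq_zero (hΦ : IsEulerInvariant Φ W) (hsep : W.Separable)
    (hX : IsCoprime W X) {l : ℕ} (h : ∀ e ≤ W.natDegree, Φ (W ^ l * X ^ e) = 0) : Φ = 0 := by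
  have hl := hΦ.apply_pow_mul_eq_zero hsep.ne_zero h
  clear h
  induction l with
  | zero => exact LinearMap.ext fun g => by simpa using hl g
  | succ l ih => exact ih (hΦ.apply_pow_mul_eq_zero_of_succ hsep hX hl)

end Field

end EulerOperator

section MomentFunctional

/-- The linear functional on polynomials with `n`-th moment `u n`, i.e. `Xⁿ ↦ u n`. -/
noncomputable def momentFunctional {R : Type*} [CommSemiring R] (u : ℕ → R) : R[X] →ₗ[R] R :=
  (basisMonomials R).constr R u

theorem momentFunctional_monomial {R : Type*} [CommSemiring R] (u : ℕ → R) (n : ℕ) (c : R) :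
    momentFunctional u (monomial n c) = c * u n := by
  have hX : momentFunctional u (monomial n 1) = u n := by
    simpa only [momentFunctional, coe_basisMonomials] using (basisMonomials R).constr_basis R u n
  rw [← hX, ← smul_eq_mul, ← map_smul, smul_monomial, smul_eq_mul, mul_one]

theorem momentFunctional_eulerOp {R ι : Type*} [CommSemiring R] [Fintype ι] {u : ℕ → R}
    {c a : ι → R} (hu : ∀ n : ℕ, (n + 1) * u (n + 1) = u n + ∑ j, c j * a j ^ n) (f : R[X]) :
    momentFunctional u (eulerOp R f) = momentFunctional u f + ∑ j, c j * f.eval (a j) := by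
  induction f using Polynomial.induction_on' with
  | add p q hp hq =>
    simp only [map_add, hp, hq, eval_add, mul_add, sum_add_distrib]
    exact add_add_add_comm _ _ _ _
  | monomial n b =>
    rw [eulerOp_monomial, momentFunctional_monomial, momentFunctional_monomial, mul_assoc, hu,
      mul_add, mul_sum]
    simp only [eval_monomial, mul_left_comm]

theorem valuation_natCast_le_one {R Γ₀ : Type*} [CommRing R] [LinearOrderedCommGroupWithZero Γ₀]
    (v : Valuation R Γ₀) (n : ℕ) : v n ≤ 1 :=
  natCast_mem v.integer n

theorem valuation_natCast_le_of_dvd {R Γ₀ : Type*} [CommRing R]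
    [LinearOrderedCommGroupWithZero Γ₀] (v : Valuation R Γ₀) {m n : ℕ} (h : m ∣ n) :
    v n ≤ v m := by
  obtain ⟨k, rfl⟩ := h
  rw [Nat.cast_mul, map_mul]
  exact mul_le_of_le_one_right' (valuation_natCast_le_one v k)

section Valuation

variable {R Γ₀ : Type*} [CommRing R] [LinearOrderedCommGroupWithZero Γ₀] (v : Valuation R Γ₀)
  {u : ℕ → R} {f : R[X]}

theorem valuation_momentFunctional_eulerOp_pow_le (hu : ∀ n, v (u n) ≤ 1)
    (hf : ∀ n, v (f.coeff n) ≤ 1) (l : ℕ) :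
    v (momentFunctional u ((eulerOp R ^ l) f)) ≤ v (l ! : ℕ) := by
  rw [f.as_sum_range, map_sum, map_sum]
  refine v.map_sum_le fun n _ => ?_
  rw [eulerOp_pow_monomial, momentFunctional_monomial, map_mul, map_mul]
  calc v (f.coeff n) * v ((n + 1).ascFactorial l : ℕ) * v (u (n + l))
      ≤ 1 * v (l ! : ℕ) * 1 := by
        gcongr
        · exact hf n
        · exact valuation_natCast_le_of_dvd v (Nat.factorial_dvd_ascFactorial _ _)
        · exact hu _
    _ = v (l ! : ℕ) := by rw [one_mul, mul_one]

theorem valuation_momentFunctional_mul_factorial_le_one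
    (hu : ∀ n, v ((n ! : ℕ) * u n) ≤ 1) (hf : ∀ n, v (f.coeff n) ≤ 1) {L : ℕ}
    (hL : f.natDegree ≤ L) : v (momentFunctional u f) * v (L ! : ℕ) ≤ 1 := by
  rw [← map_mul, f.as_sum_range, map_sum, sum_mul]
  refine v.map_sum_le fun n hn => ?_
  have hnL : n ≤ L := (Finset.mem_range_succ_iff.mp hn).trans hL
  obtain ⟨k, hk⟩ := Nat.factorial_dvd_factorial hnL
  rw [momentFunctional_monomial, hk, Nat.cast_mul,
    show f.coeff n * u n * ((n ! : ℕ) * (k : R)) = f.coeff n * ((n ! : ℕ) * u n) * k by ring,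
    map_mul, map_mul]
  exact mul_le_one' (mul_le_one' (hf n) (hu n)) (valuation_natCast_le_one v k)

end Valuation

section AbsoluteValue

variable {R : Type*} [CommRing R] (w : AbsoluteValue R ℝ)

theorem abv_apply_pow_mul_X_pow_le {Φ : R[X] →ₗ[R] R} {M C : ℝ}
    (h : ∀ n, w (Φ (X ^ n)) ≤ M * C ^ n) (W : R[X]) (l e : ℕ) :
    w (Φ (W ^ l * X ^ e)) ≤ M * (W.sum fun i b => w b * C ^ i) ^ l * C ^ e := by
  induction l generalizing e with
  | zero => simpa using h e
  | succ l ih =>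
    have hexpand : W ^ (l + 1) * X ^ e = W.sum fun i b => b • (W ^ l * X ^ (i + e)) := by
      calc W ^ (l + 1) * X ^ e = (W ^ l * X ^ e) * W.sum fun i b => Polynomial.C b * X ^ i := by
            rw [sum_C_mul_X_pow_eq]; ring
        _ = W.sum fun i b => b • (W ^ l * X ^ (i + e)) := by
            rw [Polynomial.sum, mul_sum]
            exact sum_congr rfl fun i _ => by simp only [smul_eq_C_mul]; ring
    rw [hexpand, Polynomial.sum, map_sum]
    calc w (∑ i ∈ W.support, Φ (W.coeff i • (W ^ l * X ^ (i + e))))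
        ≤ ∑ i ∈ W.support, w (Φ (W.coeff i • (W ^ l * X ^ (i + e)))) := w.sum_le _ _
      _ ≤ ∑ i ∈ W.support,
            w (W.coeff i) * (M * (W.sum fun i b => w b * C ^ i) ^ l * C ^ (i + e)) := by
          gcongr with i
          rw [map_smul, smul_eq_mul, map_mul]
          gcongr
          exact ih (i + e)
      _ = M * (W.sum fun i b => w b * C ^ i) ^ (l + 1) * C ^ e := by
          rw [_root_.pow_succ _ l, ← mul_assoc M, Polynomial.sum, mul_sum, sum_mul]
          exact sum_congr rfl fun i _ => by ring

theorem tendsto_abv_apply_pow_mul_X_pow_div_factorial {Φ : R[X] →ₗ[R] R} {M C : ℝ}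
    (h : ∀ n, w (Φ (X ^ n)) ≤ M * C ^ n) (W : R[X]) (e k N : ℕ) {B : ℝ} (hB : 0 ≤ B) :
    Tendsto (fun l => w (Φ (W ^ l * X ^ e)) * B ^ (k * l + N) / (l ! : ℕ)) atTop (𝓝 0) := by
  set A := W.sum fun i b => w b * C ^ i
  have hlim := (FloorSemiring.tendsto_pow_div_factorial_atTop (A * B ^ k)).const_mul
    (M * C ^ e * B ^ N)
  rw [mul_zero] at hlim
  refine squeeze_zero (fun l => by positivity) (fun l => ?_) hlim
  calc w (Φ (W ^ l * X ^ e)) * B ^ (k * l + N) / (l ! : ℕ)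
      ≤ M * A ^ l * C ^ e * B ^ (k * l + N) / (l ! : ℕ) := by
        gcongr
        exact abv_apply_pow_mul_X_pow_le w h W l e
    _ = M * C ^ e * B ^ N * ((A * B ^ k) ^ l / (l ! : ℕ)) := by ring

theorem exists_abv_le_mul_pow_of_recurrence [Nontrivial R] {ι : Type*} [Fintype ι]
    {u : ℕ → R} {c a : ι → R} (hw : ∀ n : ℕ, 1 ≤ w (n + 1))
    (hu : ∀ n : ℕ, (n + 1) * u (n + 1) = u n + ∑ j, c j * a j ^ n) :
    ∃ M C : ℝ, ∀ n, w (u n) ≤ M * C ^ n := by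
  set S := ∑ j, w (c j)
  set C := 2 + ∑ j, w (a j)
  have hS : 0 ≤ S := sum_nonneg fun j _ => w.nonneg _
  have hC : 2 ≤ C := le_add_of_nonneg_right (sum_nonneg fun j _ => w.nonneg _)
  have haC (j : ι) : w (a j) ≤ C :=
    (single_le_sum (f := fun j => w (a j)) (fun i _ => w.nonneg _) (mem_univ j)).trans
      (le_add_of_nonneg_left zero_le_two)
  have hsum (n : ℕ) : w (∑ j, c j * a j ^ n) ≤ S * C ^ n := by
    refine (w.sum_le _ _).trans ?_
    rw [sum_mul]
    gcongr with j
    rw [map_mul, map_pow]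
    gcongr
    exact haC j
  refine ⟨w (u 0) + S, C, fun n => ?_⟩
  induction n with
  | zero => simpa using hS
  | succ n ih =>
    calc w (u (n + 1)) ≤ w (n + 1) * w (u (n + 1)) := le_mul_of_one_le_left (w.nonneg _) (hw n)
      _ ≤ w (u n) + w (∑ j, c j * a j ^ n) := by rw [← map_mul, hu]; exact w.add_le _ _
      _ ≤ (w (u 0) + S) * C ^ n + S * C ^ n := add_le_add ih (hsum n)
      _ ≤ (w (u 0) + S) * C ^ n + (w (u 0) + S) * C ^ n := by
        gcongr
        exact le_add_of_nonneg_left (w.nonneg _)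
      _ = (w (u 0) + S) * C ^ n * 2 := (mul_two _).symm
      _ ≤ (w (u 0) + S) * C ^ (n + 1) := by
        rw [_root_.pow_succ, ← mul_assoc]
        gcongr

end AbsoluteValue

end MomentFunctional

section EulerFunctional

/-- The linear form `c₀ + ∑ⱼ cⱼ F(aⱼ)` with each of Euler's series `F` cut off after its first `n`
terms. -/
def eulerTrunc {R ι : Type*} [CommSemiring R] [Fintype ι] (c₀ : R) (c a : ι → R) (n : ℕ) : R :=
  c₀ + ∑ j, c j * ∑ k ∈ range n, (k ! : ℕ) * a j ^ k

theorem eulerTrunc_mem {R ι : Type*} [CommRing R] [Fintype ι] (S : Subring R) {c₀ : R}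
    {c a : ι → R} (hc₀ : c₀ ∈ S) (hc : ∀ j, c j ∈ S) (ha : ∀ j, a j ∈ S) (n : ℕ) :
    eulerTrunc c₀ c a n ∈ S :=
  add_mem hc₀ <| sum_mem fun j _ => mul_mem (hc j) <| sum_mem fun k _ =>
    mul_mem (natCast_mem S _) (pow_mem (ha j) k)

theorem coeff_nodal_pow_mul_X_pow_mem {R ι : Type*} [CommRing R] [Fintype ι] (S : Subring R)
    {a : ι → R} (ha : ∀ j, a j ∈ S) (l e n : ℕ) :
    (Lagrange.nodal univ a ^ l * X ^ e).coeff n ∈ S := by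
  have hlifts : Lagrange.nodal univ a ^ l * X ^ e ∈ liftsRing S.subtype := by
    refine mul_mem (pow_mem (prod_mem fun j _ => sub_mem ?_ ?_) l) (pow_mem ?_ e)
    · exact (lifts_iff_liftsRing _ _).mp (X_mem_lifts _)
    · exact (lifts_iff_liftsRing _ _).mp (C_mem_lifts S.subtype ⟨a j, ha j⟩)
    · exact (lifts_iff_liftsRing _ _).mp (X_mem_lifts _)
  simpa using (lifts_iff_coeff_lifts _).mp ((lifts_iff_liftsRing _ _).mpr hlifts) n

theorem natDegree_nodal_pow_mul_X_pow {R ι : Type*} [CommRing R] [Nontrivial R] [Fintype ι]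
    (a : ι → R) (l e : ℕ) :
    (Lagrange.nodal univ a ^ l * X ^ e).natDegree = Fintype.card ι * l + e := by
  rw [(Lagrange.nodal_monic.pow l).natDegree_mul (monic_X_pow e), natDegree_X_pow,
    Lagrange.nodal_monic.natDegree_pow, Lagrange.natDegree_nodal, Finset.card_univ, mul_comm]

variable {κ ι : Type*} [Field κ] [Fintype ι] (c₀ : κ) (c a : ι → κ)

/-- The normalised truncations `eulerTrunc c₀ c a n / n!`, to be used as moments. -/
def eulerMoment (n : ℕ) : κ := eulerTrunc c₀ c a n / (n ! : ℕ)

/-- The linear functional on polynomials whose moments are `eulerMoment c₀ c a`. -/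
noncomputable def eulerFunctional : κ[X] →ₗ[κ] κ := momentFunctional (eulerMoment c₀ c a)

section CharZero

variable [CharZero κ]

theorem eulerMoment_succ (n : ℕ) :
    (n + 1) * eulerMoment c₀ c a (n + 1) = eulerMoment c₀ c a n + ∑ j, c j * a j ^ n := by
  have hfac : ((n ! : ℕ) : κ) ≠ 0 := Nat.cast_ne_zero.mpr n.factorial_ne_zero
  have hsucc : (n + 1 : κ) ≠ 0 := n.cast_add_one_ne_zero
  have htrunc : eulerTrunc c₀ c a (n + 1) =
      eulerTrunc c₀ c a n + (n ! : ℕ) * ∑ j, c j * a j ^ n := by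
    simp only [eulerTrunc, sum_range_succ, mul_add, sum_add_distrib, mul_sum, add_assoc,
      mul_left_comm]
  rw [eulerMoment, eulerMoment, htrunc, Nat.factorial_succ]
  push_cast
  field_simp

theorem eulerFunctional_eulerOp (f : κ[X]) :
    eulerFunctional c₀ c a (eulerOp κ f) =
      eulerFunctional c₀ c a f + ∑ j, c j * f.eval (a j) :=
  momentFunctional_eulerOp (eulerMoment_succ c₀ c a) f

theorem isEulerInvariant_eulerFunctional_nodal :
    IsEulerInvariant (eulerFunctional c₀ c a) (Lagrange.nodal univ a) := fun g => by
  simp [eulerFunctional_eulerOp, Lagrange.eval_nodal_at_node]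

variable {c₀ c a}

theorem eulerFunctional_ne_zero (ha : Function.Injective a) (h : c₀ ≠ 0 ∨ ∃ j, c j ≠ 0) :
    eulerFunctional c₀ c a ≠ 0 := by
  classical
  intro hzero
  rcases h with hc₀ | ⟨i, hi⟩
  · have hone := momentFunctional_monomial (eulerMoment c₀ c a) 0 1
    rw [← eulerFunctional, hzero] at hone
    exact hc₀ (by simpa [eulerMoment, eulerTrunc] using hone.symm)
  · have hsum := eulerFunctional_eulerOp c₀ c a (Lagrange.basis univ a i)
    rw [hzero, LinearMap.zero_apply, LinearMap.zero_apply, zero_add, sum_eq_single_of_mem i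
      (mem_univ i) fun j _ hj => by rw [Lagrange.eval_basis_of_ne hj.symm (mem_univ j), mul_zero],
      Lagrange.eval_basis_self ha.injOn (mem_univ i), mul_one] at hsum
    exact hi hsum.symm

theorem exists_eulerFunctional_nodal_pow_mul_X_pow_ne_zero (ha : Function.Injective a)
    (ha₀ : ∀ j, a j ≠ 0) (h : c₀ ≠ 0 ∨ ∃ j, c j ≠ 0) (l : ℕ) :
    ∃ e ≤ Fintype.card ι, eulerFunctional c₀ c a (Lagrange.nodal univ a ^ l * X ^ e) ≠ 0 := by
  have hsep : (Lagrange.nodal univ a).Separable := separable_prod_X_sub_C_iff.mpr ha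
  have hX : IsCoprime (Lagrange.nodal univ a) X := IsCoprime.prod_left fun j _ => by
    simpa using isCoprime_X_sub_C_of_isUnit_sub (b := 0) (sub_ne_zero_of_ne (ha₀ j)).isUnit
  by_contra! hvanish
  refine eulerFunctional_ne_zero ha h
    ((isEulerInvariant_eulerFunctional_nodal c₀ c a).eq_zero hsep hX fun e he => hvanish e ?_)
  rwa [Lagrange.natDegree_nodal] at he

end CharZero

section Valuation

variable {Γ₀ : Type*} [LinearOrderedCommGroupWithZero Γ₀] [CharZero κ] (v : Valuation κ Γ₀)
variable {c₀ c a}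

theorem valuation_eulerFunctional_nodal_le_of_eulerTrunc_le (ha : ∀ j, v (a j) ≤ 1)
    (h : ∀ n, v (eulerTrunc c₀ c a n) ≤ v (n ! : ℕ)) (l e : ℕ) :
    v (eulerFunctional c₀ c a (Lagrange.nodal univ a ^ l * X ^ e)) ≤ v (l ! : ℕ) := by
  rw [← (isEulerInvariant_eulerFunctional_nodal c₀ c a).apply_eulerOp_pow]
  refine valuation_momentFunctional_eulerOp_pow_le v (fun n => ?_)
    (coeff_nodal_pow_mul_X_pow_mem v.integer ha l e) l
  rw [eulerMoment, map_div₀]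
  exact div_le_one_of_le₀ (h n) zero_le

theorem valuation_eulerFunctional_nodal_mul_factorial_le_one (hc₀ : v c₀ ≤ 1)
    (hc : ∀ j, v (c j) ≤ 1) (ha : ∀ j, v (a j) ≤ 1) (l e : ℕ) :
    v (eulerFunctional c₀ c a (Lagrange.nodal univ a ^ l * X ^ e)) *
      v ((Fintype.card ι * l + e)! : ℕ) ≤ 1 := by
  refine valuation_momentFunctional_mul_factorial_le_one v (fun n => ?_)
    (coeff_nodal_pow_mul_X_pow_mem v.integer ha l e) (natDegree_nodal_pow_mul_X_pow a l e).le
  rw [eulerMoment, mul_div_cancel₀ _ (Nat.cast_ne_zero.mpr n.factorial_ne_zero)]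
  exact eulerTrunc_mem v.integer hc₀ hc ha n

end Valuation

end EulerFunctional

section FactorialValuation

variable {R Γ₀ : Type*} [CommRing R] [LinearOrderedCommGroupWithZero Γ₀] {v : Valuation R Γ₀}
  {p : ℕ}

theorem valuation_natCast_eq_one_of_coprime {n : ℕ} (hvp : v p < 1) (hpn : p.Coprime n) :
    v n = 1 := by
  obtain ⟨x, y, hxy⟩ := Nat.isCoprime_iff_coprime.mpr hpn
  refine (valuation_natCast_le_one v n).antisymm (not_lt.mp fun hvn => ?_)
  have hlt (z : ℤ) {k : ℕ} (hk : v k < 1) : v (z * k) < 1 := by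
    rw [map_mul]
    exact (mul_le_of_le_one_left' (intCast_mem v.integer z)).trans_lt hk
  have hone : (x * p + y * n : R) = 1 := by exact_mod_cast congrArg (Int.cast : ℤ → R) hxy
  exact (v.map_add_lt (hlt x hvp) (hlt y hvn)).ne (by rw [hone, map_one])

theorem valuation_pow_le_factorial (hp : p.Prime) (hvp : v p < 1) (n : ℕ) :
    v p ^ n ≤ v (n ! : ℕ) := by
  have : Fact p.Prime := ⟨hp⟩
  obtain ⟨k, t, hpt, hk⟩ :=
    Nat.exists_eq_pow_mul_and_not_dvd n.factorial_ne_zero p hp.ne_one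
  have hkn : k ≤ n :=
    ((padicValNat_dvd_iff_le n.factorial_ne_zero).mp (Dvd.intro t hk.symm)).trans
      (padicValNat_factorial_le p n)
  rw [hk, Nat.cast_mul, Nat.cast_pow, map_mul, map_pow,
    valuation_natCast_eq_one_of_coprime hvp (hp.coprime_iff_not_dvd.mpr hpt), mul_one]
  exact pow_le_pow_right_of_le_one' hvp.le hkn

theorem eventually_valuation_factorial_lt [MulArchimedean Γ₀] (hp : p.Prime) (hvp : v p < 1)
    {γ : Γ₀} (hγ : γ ≠ 0) : ∀ᶠ n : ℕ in atTop, v (n ! : ℕ) < γ := by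
  have : Fact p.Prime := ⟨hp⟩
  obtain ⟨k, hk⟩ := exists_pow_lt₀ hvp (Units.mk0 γ hγ)
  filter_upwards [eventually_ge_atTop (p * k)] with n hn
  have hdvd : p ^ k ∣ n ! := by
    refine Dvd.dvd.trans ?_ (Nat.factorial_dvd_factorial hn)
    rw [padicValNat_dvd_iff_le (p * k).factorial_ne_zero, padicValNat_factorial_mul]
    exact Nat.le_add_left k _
  calc v (n ! : ℕ) ≤ v (p ^ k : ℕ) := valuation_natCast_le_of_dvd v hdvd
    _ = v p ^ k := by rw [Nat.cast_pow, map_pow]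
    _ < γ := hk

end FactorialValuation

section ValuedRing

variable {L Γ₀ : Type*} [CommRing L] [LinearOrderedCommGroupWithZero Γ₀] [Valued L Γ₀]

theorem summable_factorial_mul_pow [MulArchimedean Γ₀] [CompleteSpace L] {p : ℕ} (hp : p.Prime)
    (hvp : Valued.v (p : L) < 1) {x : L} (hx : Valued.v x ≤ 1) :
    Summable fun n : ℕ => ((n ! : ℕ) : L) * x ^ n := by
  have : NonarchimedeanRing L :=
    (Valued.toUniformSpace_eq L Γ₀).symm ▸ Valued.v.subgroups_basis.nonarchimedean
  refine NonarchimedeanAddGroup.summable_of_tendsto_cofinite_zero ?_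
  rw [Nat.cofinite_eq_atTop, (Valued.hasBasis_nhds_zero L Γ₀).tendsto_right_iff]
  intro γ _
  have hγ : MonoidWithZeroHom.ValueGroup₀.embedding γ.1 ≠ 0 := by simp
  filter_upwards [eventually_valuation_factorial_lt hp hvp hγ] with n hn
  rw [Valuation.restrict_lt_iff_lt_embedding, map_mul, map_pow]
  exact (mul_le_of_le_one_right' (pow_le_one' hx n)).trans_lt hn

theorem valuation_sub_sum_range_le {f : ℕ → L} {s : L} (hf : HasSum f s) {n : ℕ} {y : L}
    (hy : ∀ k ≥ n, Valued.v (f k) ≤ Valued.v y) :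
    Valued.v (s - ∑ k ∈ range n, f k) ≤ Valued.v y := by
  have hclosed : IsClosed {x : L | Valued.v x ≤ Valued.v y} := by
    simpa only [Valuation.restrict_le_iff] using
      Valued.isClosed_closedBall L (Valued.v.restrict y)
  exact hclosed.mem_of_tendsto ((hasSum_nat_add_iff' n).mpr hf) <| Eventually.of_forall fun t =>
    Valued.v.map_sum_le fun k _ => hy (k + n) (Nat.le_add_left n k)

end ValuedRing

section Places

variable {K : Type*} [Field K] [NumberField K] (v : HeightOneSpectrum (𝓞 K))

theorem exists_prime_valuation_lt_one : ∃ p : ℕ, p.Prime ∧ v.valuation K p < 1 := by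
  have : NeZero v.asIdeal := ⟨v.ne_bot⟩
  refine ⟨Ideal.absNorm (Ideal.under ℤ v.asIdeal), Nat.absNorm_under_prime v.asIdeal, ?_⟩
  simpa using (v.valuation_lt_one_iff_mem (K := K) _).mpr (Int.absNorm_under_mem v.asIdeal)

theorem exists_forall_valuation_natCast_pow_le_factorial (S : Finset (HeightOneSpectrum (𝓞 K))) :
    ∃ B : ℕ, B ≠ 0 ∧ ∀ v ∈ S, ∀ n, v.valuation K B ^ n ≤ v.valuation K (n ! : ℕ) := by
  choose p hp hvp using exists_prime_valuation_lt_one (K := K)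
  refine ⟨∏ v ∈ S, p v, prod_ne_zero_iff.mpr fun v _ => (hp v).ne_zero, fun v hv n => ?_⟩
  calc v.valuation K (∏ v ∈ S, p v : ℕ) ^ n ≤ v.valuation K (p v) ^ n := by
        gcongr
        exact valuation_natCast_le_of_dvd _ (dvd_prod_of_mem p hv)
    _ ≤ v.valuation K (n ! : ℕ) := valuation_pow_le_factorial (hp v) (hvp v) n

theorem hasSum_eulerF (α : 𝓞 K) :
    HasSum (fun n : ℕ => ((n ! : ℕ) : v.adicCompletion K) *
      algebraMap K (v.adicCompletion K) α ^ n) (eulerF K v α) := by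
  obtain ⟨p, hp, hvp⟩ := exists_prime_valuation_lt_one v
  have hv (x : K) : Valued.v (algebraMap K (v.adicCompletion K) x) = v.valuation K x :=
    HeightOneSpectrum.adicCompletion.valued_coe K v x
  refine (summable_factorial_mul_pow hp ?_ ?_).hasSum
  · rwa [← map_natCast (algebraMap K (v.adicCompletion K)), hv]
  · rw [hv]
    exact v.valuation_le_one α

variable {ι : Type*} [Fintype ι]

/-- The linear form `Λ_v = λ₀ + ∑ⱼ λⱼ F_v(αⱼ)` in the values of Euler's series at the place `v`. -/
noncomputable def eulerForm (lam₀ : 𝓞 K) (lam α : ι → 𝓞 K) : v.adicCompletion K :=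
  algebraMap K (v.adicCompletion K) lam₀ +
    ∑ j, algebraMap K (v.adicCompletion K) (lam j) * eulerF K v (α j)

theorem valuation_eulerTrunc_le_factorial_of_eulerForm_eq_zero {lam₀ : 𝓞 K} {lam α : ι → 𝓞 K}
    (h : eulerForm v lam₀ lam α = 0) (n : ℕ) :
    v.valuation K (eulerTrunc (lam₀ : K) (fun j => (lam j : K)) (fun j => (α j : K)) n) ≤
      v.valuation K (n ! : ℕ) := by
  set emb := algebraMap K (v.adicCompletion K)
  have hv (x : K) : Valued.v (emb x) = v.valuation K x :=
    HeightOneSpectrum.adicCompletion.valued_coe K v x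
  have hint (x : 𝓞 K) : Valued.v (emb x) ≤ 1 := (hv x).trans_le (v.valuation_le_one x)
  have htail (j : ι) : Valued.v (eulerF K v (α j) - ∑ k ∈ range n, (k ! : ℕ) * emb (α j) ^ k) ≤
      Valued.v ((n ! : ℕ) : v.adicCompletion K) := by
    refine valuation_sub_sum_range_le (hasSum_eulerF v (α j)) fun k hk => ?_
    rw [map_mul, map_pow]
    exact (mul_le_of_le_one_right' (pow_le_one' (hint (α j)) k)).trans
      (valuation_natCast_le_of_dvd _ (Nat.factorial_dvd_factorial hk))
  have hdiff : emb (eulerTrunc (lam₀ : K) (fun j => (lam j : K)) (fun j => (α j : K)) n) =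
      -∑ j, emb (lam j) * (eulerF K v (α j) - ∑ k ∈ range n, (k ! : ℕ) * emb (α j) ^ k) := by
    rw [← sub_zero (emb _), ← h, eulerForm, eulerTrunc]
    simp only [map_add, map_sum, map_mul, map_pow, map_natCast, mul_sub, sum_sub_distrib]
    ring
  rw [← hv, ← hv, hdiff, Valuation.map_neg, map_natCast]
  refine Valued.v.map_sum_le fun j _ => ?_
  rw [map_mul]
  exact (mul_le_of_le_one_left' (hint (lam j))).trans (htail j)

theorem valuation_eulerFunctional_mul_pow_div_factorial_le_one (lam₀ : 𝓞 K) (lam α : ι → 𝓞 K)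
    {B : ℕ} (h : eulerForm v lam₀ lam α = 0 ∨ ∀ n, v.valuation K B ^ n ≤ v.valuation K (n ! : ℕ))
    (l e : ℕ) :
    v.valuation K (eulerFunctional (lam₀ : K) (fun j => (lam j : K)) (fun j => (α j : K))
      (Lagrange.nodal univ (fun j => (α j : K)) ^ l * X ^ e) *
        B ^ ((Fintype.card ι + 1) * l + e) / (l ! : ℕ)) ≤ 1 := by
  rw [map_div₀, map_mul, map_pow]
  refine div_le_one_of_le₀ ?_ zero_le
  rcases h with h | hB
  · exact (mul_le_of_le_one_right' (pow_le_one' (valuation_natCast_le_one _ B) _)).trans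
      (valuation_eulerFunctional_nodal_le_of_eulerTrunc_le _ (fun j => v.valuation_le_one (α j))
        (valuation_eulerTrunc_le_factorial_of_eulerForm_eq_zero v h) l e)
  · have hfac := valuation_eulerFunctional_nodal_mul_factorial_le_one (v.valuation K)
      (v.valuation_le_one lam₀) (fun j => v.valuation_le_one (lam j))
      (fun j => v.valuation_le_one (α j)) l e
    rw [show (Fintype.card ι + 1) * l + e = (Fintype.card ι * l + e) + l by ring, pow_add,
      ← mul_assoc]
    calc _ * v.valuation K B ^ (Fintype.card ι * l + e) * v.valuation K B ^ l
        ≤ 1 * v.valuation K (l ! : ℕ) :=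
          mul_le_mul' ((mul_le_mul_right (hB _) _).trans hfac) (hB l)
      _ = v.valuation K (l ! : ℕ) := one_mul _

theorem eventually_forall_infinitePlace_eulerFunctional_lt_one (c₀ : K) (c a : ι → K) (W : K[X])
    (B k N : ℕ) : ∀ᶠ l : ℕ in atTop, ∀ w : InfinitePlace K, ∀ e ≤ N,
      w (eulerFunctional c₀ c a (W ^ l * X ^ e) * B ^ (k * l + e) / (l ! : ℕ)) < 1 := by
  refine eventually_all.mpr fun w => (Set.finite_Iic N).eventually_all.mpr fun e _ => ?_
  have hw (n : ℕ) : 1 ≤ w.1 (n + 1) := by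
    rw [← Nat.cast_succ]
    exact ((InfinitePlace.map_natCast w (n + 1)).symm ▸ Nat.one_le_cast.mpr n.succ_pos :)
  obtain ⟨M, C, hMC⟩ := exists_abv_le_mul_pow_of_recurrence w.1 hw (eulerMoment_succ c₀ c a)
  have hX (n : ℕ) : w.1 (eulerFunctional c₀ c a (X ^ n)) ≤ M * C ^ n := by
    rw [X_pow_eq_monomial, eulerFunctional, momentFunctional_monomial, one_mul]
    exact hMC n
  filter_upwards [(tendsto_abv_apply_pow_mul_X_pow_div_factorial w.1 hX W e k e
    B.cast_nonneg).eventually_lt_const one_pos] with l hl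
  rw [map_div₀, map_mul, map_pow, InfinitePlace.map_natCast, InfinitePlace.map_natCast]
  exact hl

theorem exists_infinitePlace_one_le {x : K}
    (hint : ∀ v : HeightOneSpectrum (𝓞 K), v.valuation K x ≤ 1) (hx : x ≠ 0) :
    ∃ w : InfinitePlace K, 1 ≤ w x := by
  obtain ⟨y, rfl⟩ := HeightOneSpectrum.mem_integers_of_valuation_le_one K x hint
  obtain ⟨w⟩ : Nonempty (InfinitePlace K) := inferInstance
  by_contra! hlt
  exact (InfinitePlace.one_le_of_lt_one (w := w) (by simpa using hx) fun z _ => hlt z).not_gt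
    (hlt w)

end Places

/-- for pairwise distinct nonzero algebraic integers `α₁,…,α_m` and
`λ₀,…,λ_m ∈ 𝓞 K` not all zero, there are infinitely many non-Archimedean places `v`
of `K` with `Λ_v = λ₀ + λ₁ F_v(α₁) + … + λ_m F_v(α_m) ≠ 0`. -/
theorem euler_linear_form_nonvanishing_infinite (K : Type*) [Field K] [NumberField K]
    {m : ℕ} (hm : 1 ≤ m)
    (α : Fin m → 𝓞 K) (hα0 : ∀ j, α j ≠ 0) (hinj : Function.Injective α)
    (lam : Fin (m + 1) → 𝓞 K) (hlam : ∃ i, lam i ≠ 0) :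
    {v : HeightOneSpectrum (𝓞 K) |
      algebraMap K (v.adicCompletion K) ((lam 0 : K)) +
        ∑ j : Fin m, algebraMap K (v.adicCompletion K) ((lam j.succ : K)) *
          eulerF K v (α j) ≠ 0}.Infinite := by
  intro hfin
  set a : Fin m → K := fun j => α j
  have ha : Function.Injective a := RingOfIntegers.coe_injective.comp hinj
  have ha₀ (j : Fin m) : a j ≠ 0 := RingOfIntegers.coe_ne_zero_iff.mpr (hα0 j)
  have hlam' : (lam 0 : K) ≠ 0 ∨ ∃ j : Fin m, (lam j.succ : K) ≠ 0 := by
    simpa only [RingOfIntegers.coe_ne_zero_iff, Fin.exists_fin_succ] using hlam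
  obtain ⟨B, hB₀, hB⟩ := exists_forall_valuation_natCast_pow_le_factorial hfin.toFinset
  have hplace (v : HeightOneSpectrum (𝓞 K)) : eulerForm v (lam 0) (fun j => lam j.succ) α = 0 ∨
      ∀ n, v.valuation K B ^ n ≤ v.valuation K (n ! : ℕ) :=
    or_iff_not_imp_left.mpr fun hv => hB v (hfin.mem_toFinset.mpr hv)
  obtain ⟨l, hsmall⟩ := (eventually_forall_infinitePlace_eulerFunctional_lt_one (lam 0 : K)
    (fun j => lam (Fin.succ j)) a (Lagrange.nodal univ a) B
    (Fintype.card (Fin m) + 1) (Fintype.card (Fin m))).exists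
  obtain ⟨e, he, hne⟩ := exists_eulerFunctional_nodal_pow_mul_X_pow_ne_zero ha ha₀ hlam' l
  have hint (v : HeightOneSpectrum (𝓞 K)) :=
    valuation_eulerFunctional_mul_pow_div_factorial_le_one v (lam 0) _ α (hplace v) l e
  obtain ⟨w, hw⟩ := exists_infinitePlace_one_le hint
    (by simpa [hB₀, l.factorial_ne_zero] using hne)
  exact (hsmall w e he).not_ge hw
end

section
/- Let K be a number field, m ≥ 1, λ_0,λ_1,…,λ_m ∈ Z_K with λ_j ≠ 0 for at least one j, and α_1,…,α_m ∈ Z_K pairwise distinct nonzero algebraic integers. Let n ≥ 3 be an integer, let R be the union of the primes lying in r residue classes of the reduced residue system modulo n, where r > m·φ(n)/(m+1), and let V = { v ∈ V_0 : v | p for some p ∈ R }. Then there exists a place v' ∈ V such that λ_0 + λ_1 F_{v'}(α_1) + … + λ_m F_{v'}(α_m) ≠ 0. -/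
open NumberField IsDedekindDomain Nat Finset

/-!
Let `Λ_a : Xⁿ ↦ n! aⁿ` (`eulerMoment a`) be the functional whose value at the formal series
`1 / (1 - X)` is Euler's series `F(a)`. For a polynomial `b` and `q = (b - b(1)) / (X - 1)` one has
`b(1) F(a) - Λ_a(q) = ∑ₖ Λ_a(Xᵏ b)`. If the Laplace transform of `b` is `M! G` with `G` divisible
by `(X - a) ^ l`, then the terms with `k < l` vanish and the others are divisible by `M! l!`. Taking
`G = Xⁱ ∏ⱼ (X - αⱼ) ^ l` gives simultaneous approximations to `F(α₁), …, F(α_m)`, and a zero count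
shows that for some `i ≤ m` the integer `T = λ₀ b(1) + ∑ⱼ λⱼ Λ_{αⱼ}(q)` is nonzero.

If the linear form vanishes at all places above the primes of `R`, then at those places `T` is as
divisible as `M! l!`, where `M = m (l + 1)`, whereas its conjugates are at most `M! C ^ l`. Hence
`(m + 1) ∑ log p / p ≤ m log l + O(1)`, where the sum runs over the primes `p ≤ l` of `R`. By
Dirichlet's theorem (the pole of the logarithmic derivative of the `L`-functions at `1`, transferred
by Abel summation) a union of `r` classes allows this only if `r / φ(n) ≤ m / (m + 1)`.
-/

namespace EulerSeries

open Polynomial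

section Moments

variable {R : Type*} [CommRing R]

/-- The linear map `∑ xₙ Xⁿ ↦ ∑ cₙ xₙ Xⁿ`, which specialises to the Laplace and Borel transforms. -/
noncomputable def scaleCoeff (c : ℕ → R) : R[X] →ₗ[R] R[X] :=
  lsum fun n => monomial n ∘ₗ LinearMap.mulLeft R (c n)

theorem coeff_scaleCoeff (c : ℕ → R) (p : R[X]) (n : ℕ) :
    (scaleCoeff c p).coeff n = c n * p.coeff n := by
  simp +contextual [scaleCoeff, lsum_apply, sum_def, coeff_monomial]

/-- The Laplace transform `Xⁿ ↦ n! Xⁿ`, i.e. `p ↦ ∫₀^∞ p(Xt) e⁻ᵗ dt`. -/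
noncomputable def laplace : R[X] →ₗ[R] R[X] :=
  scaleCoeff fun n => (n ! : R)

/-- The Borel transform `Xⁿ ↦ (M! / n!) Xⁿ` of polynomials of degree at most `M`, whose
denominators are cleared by the factor `M!`. -/
noncomputable def borel (M : ℕ) : R[X] →ₗ[R] R[X] :=
  scaleCoeff fun n => (M.descFactorial (M - n) : R)

theorem laplace_borel {M : ℕ} {p : R[X]} (hp : p.natDegree ≤ M) :
    laplace (borel M p) = C (M ! : R) * p := by
  ext n
  rw [laplace, borel, coeff_scaleCoeff, coeff_scaleCoeff, coeff_C_mul, ← mul_assoc, ← Nat.cast_mul]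
  rcases le_or_gt n M with hn | hn
  · have h := Nat.factorial_mul_descFactorial (Nat.sub_le M n)
    rw [Nat.sub_sub_self hn] at h
    rw [h]
  · simp [coeff_eq_zero_of_natDegree_lt (hp.trans_lt hn)]

theorem natDegree_scaleCoeff_le (c : ℕ → R) (p : R[X]) :
    (scaleCoeff c p).natDegree ≤ p.natDegree :=
  natDegree_le_iff_coeff_eq_zero.mpr fun n hn => by
    rw [coeff_scaleCoeff, coeff_eq_zero_of_natDegree_lt hn, mul_zero]

theorem natDegree_laplace_le (p : R[X]) : (laplace p).natDegree ≤ p.natDegree :=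
  natDegree_scaleCoeff_le _ p

theorem natDegree_borel_le (M : ℕ) (p : R[X]) : (borel M p).natDegree ≤ p.natDegree :=
  natDegree_scaleCoeff_le _ p

theorem laplace_X_pow_mul (k : ℕ) (p : R[X]) :
    laplace (X ^ k * p) = C (k ! : R) * (X ^ k * hasseDeriv k (X ^ k * laplace p)) := by
  ext i
  rw [laplace, coeff_scaleCoeff, coeff_C_mul, coeff_X_pow_mul', coeff_X_pow_mul']
  split_ifs with hki
  · obtain ⟨n, rfl⟩ := Nat.exists_eq_add_of_le' hki
    rw [hasseDeriv_coeff, Nat.add_sub_cancel, coeff_X_pow_mul, coeff_scaleCoeff,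
      ← Nat.add_choose_mul_factorial_mul_factorial n k, ← Nat.choose_symm_add]
    push_cast
    ring
  · simp

theorem X_sub_C_pow_dvd_iff_eval_hasseDeriv {a : R} {l : ℕ} {p : R[X]} :
    (X - C a) ^ l ∣ p ↔ ∀ k < l, (hasseDeriv k p).eval a = 0 := by
  simp only [X_sub_C_pow_dvd_iff, ← taylor_apply, X_pow_dvd_iff, taylor_coeff]

/-- The moment functional `Xⁿ ↦ n! aⁿ`, whose value at the formal series `1 / (1 - X)` is Euler's
factorial series at `a`. -/
noncomputable def eulerMoment (a : R) : R[X] →ₗ[R] R :=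
  leval a ∘ₗ laplace

theorem eulerMoment_X_pow (a : R) (n : ℕ) : eulerMoment a (X ^ n) = n ! * a ^ n := by
  have h : laplace (X ^ n : R[X]) = C (n ! : R) * X ^ n := by
    ext i
    simp +contextual [laplace, coeff_scaleCoeff, coeff_X_pow]
  simp [eulerMoment, h]

theorem eulerMoment_X_pow_mul (a : R) (k : ℕ) (p : R[X]) :
    eulerMoment a (X ^ k * p) =
      k ! * (a ^ k * (hasseDeriv k (X ^ k * laplace p)).eval a) := by
  simp [eulerMoment, laplace_X_pow_mul]

theorem factorial_dvd_eulerMoment_X_pow_mul (a : R) (k : ℕ) (p : R[X]) :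
    (k ! : R) ∣ eulerMoment a (X ^ k * p) :=
  eulerMoment_X_pow_mul a k p ▸ dvd_mul_right _ _

theorem eulerMoment_X_pow_mul_eq_zero {a : R} {k l : ℕ} {p : R[X]}
    (hp : (X - C a) ^ l ∣ laplace p) (hk : k < l) : eulerMoment a (X ^ k * p) = 0 := by
  rw [eulerMoment_X_pow_mul,
    X_sub_C_pow_dvd_iff_eval_hasseDeriv.mp (hp.mul_left (X ^ k)) k hk, mul_zero, mul_zero]

theorem X_sub_C_pow_dvd_laplace [IsDomain R] [CharZero R] {a : R} (ha : a ≠ 0) {l : ℕ} {p : R[X]}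
    (hp : ∀ k < l, eulerMoment a (X ^ k * p) = 0) : (X - C a) ^ l ∣ laplace p := by
  induction l with
  | zero => simp
  | succ l ih =>
    have hX : ¬ X - C a ∣ (X : R[X]) ^ l := by simp [dvd_iff_isRoot, ha]
    refine (prime_X_sub_C a).pow_dvd_of_dvd_mul_left _ hX
      (X_sub_C_pow_dvd_iff_eval_hasseDeriv.mpr fun k hk => ?_)
    rcases Nat.lt_succ_iff_lt_or_eq.mp hk with hk | rfl
    · have hl := ih fun i hi => hp i (hi.trans l.lt_succ_self)
      exact X_sub_C_pow_dvd_iff_eval_hasseDeriv.mp (hl.mul_left _) k hk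
    · have h := hp k hk
      rw [eulerMoment_X_pow_mul] at h
      simpa [Nat.factorial_ne_zero, ha] using h

/-- The quotient of `p - p(1)` by `X - 1`. It is the numerator that goes with the
denominator `p` in the approximation of `1 / (1 - X)`: `p(1) / (1 - X)` exceeds it by
`p / (1 - X)`. -/
noncomputable def divXSubOne : R[X] →ₗ[R] R[X] :=
  lsum fun n => LinearMap.toSpanSingleton R R[X] (∑ i ∈ Finset.range n, X ^ i)

theorem divXSubOne_X_pow (n : ℕ) :
    divXSubOne (X ^ n : R[X]) = ∑ i ∈ Finset.range n, X ^ i := by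
  rw [divXSubOne, lsum_apply, X_pow_eq_monomial, sum_monomial_index _ _ (by simp)]
  simp

theorem X_sub_one_mul_divXSubOne (p : R[X]) :
    (X - 1) * divXSubOne p = p - C (p.eval 1) := by
  induction p using Polynomial.induction_on' with
  | add p q hp hq => rw [map_add, mul_add, hp, hq, eval_add, C_add]; ring
  | monomial n c =>
    rw [← C_mul_X_pow_eq_monomial, ← smul_eq_C_mul, map_smul, divXSubOne_X_pow, mul_smul_comm,
      mul_geom_sum]
    simp [smul_eq_C_mul, mul_sub]

theorem C_eval_one_mul_geom_sum_sub_divXSubOne (p : R[X]) (N : ℕ) :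
    C (p.eval 1) * ∑ k ∈ Finset.range N, X ^ k - divXSubOne p =
      (∑ k ∈ Finset.range N, X ^ k) * p - X ^ N * divXSubOne p := by
  linear_combination (∑ k ∈ Finset.range N, X ^ k) * X_sub_one_mul_divXSubOne p
    - divXSubOne p * geom_sum_mul (X : R[X]) N

end Moments

section Pade

variable {R : Type*} [CommRing R] {m : ℕ}

/-- The common denominator (entry `0`) and the numerators (entry `j + 1`, for Euler's series at
`α j`), evaluated at `1`, of the simultaneous Padé approximation with denominator `borel M G`. -/
noncomputable def padeVector (α : Fin m → R) (M : ℕ) : R[X] →ₗ[R] (Fin (m + 1) → R) :=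
  LinearMap.pi <| Fin.cons (leval 1 ∘ₗ borel M) fun j => eulerMoment (α j) ∘ₗ divXSubOne ∘ₗ borel M

theorem padeVector_zero (α : Fin m → R) (M : ℕ) (G : R[X]) :
    padeVector α M G 0 = (borel M G).eval 1 := rfl

theorem padeVector_succ (α : Fin m → R) (M : ℕ) (G : R[X]) (j : Fin m) :
    padeVector α M G j.succ = eulerMoment (α j) (divXSubOne (borel M G)) := rfl

theorem eulerMoment_X_pow_mul_borel_eq_zero {a : R} {M k l : ℕ} {G : R[X]}
    (hdeg : G.natDegree ≤ M) (hdvd : (X - C a) ^ l ∣ G) (hk : k < l) :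
    eulerMoment a (X ^ k * borel M G) = 0 :=
  eulerMoment_X_pow_mul_eq_zero (laplace_borel hdeg ▸ hdvd.mul_left _) hk

theorem factorial_mul_factorial_dvd_eulerMoment {a : R} {M l : ℕ} {G : R[X]}
    (hdeg : G.natDegree ≤ M) (hdvd : (X - C a) ^ l ∣ G) (k : ℕ) :
    ((M ! * l ! : ℕ) : R) ∣ eulerMoment a (X ^ k * borel M G) := by
  rcases lt_or_ge k l with hk | hk
  · rw [eulerMoment_X_pow_mul_borel_eq_zero hdeg hdvd hk]
    exact dvd_zero _
  · have hlk : (l ! : R) ∣ k ! := Nat.cast_dvd_cast (Nat.factorial_dvd_factorial hk)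
    rw [eulerMoment_X_pow_mul, laplace_borel hdeg, ← smul_eq_C_mul, mul_smul_comm, map_smul,
      eval_smul, smul_eq_mul, mul_left_comm (a ^ k), ← mul_assoc, Nat.cast_mul, mul_comm (M ! : R)]
    exact (mul_dvd_mul_right hlk _).mul_right _

theorem eval_borel_mul_sum_sub_eulerMoment (a : R) (M N : ℕ) (G : R[X]) :
    (borel M G).eval 1 * (∑ k ∈ Finset.range N, (k ! : R) * a ^ k)
        - eulerMoment a (divXSubOne (borel M G)) =
      (∑ k ∈ Finset.range N, eulerMoment a (X ^ k * borel M G))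
        - eulerMoment a (X ^ N * divXSubOne (borel M G)) := by
  have h := congrArg (eulerMoment a) (C_eval_one_mul_geom_sum_sub_divXSubOne (borel M G) N)
  simpa only [← smul_eq_C_mul, map_sub, map_smul, map_sum, eulerMoment_X_pow, smul_eq_mul,
    Finset.sum_mul] using h

theorem factorial_mul_factorial_dvd_linearForm_sub {α : Fin m → R} {M l N : ℕ} {G : R[X]}
    (hdeg : G.natDegree ≤ M) (hdvd : ∀ j, (X - C (α j)) ^ l ∣ G) (hN : M ! * l ! ∣ N !)
    (lam : Fin (m + 1) → R) :
    ((M ! * l ! : ℕ) : R) ∣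
      (borel M G).eval 1 *
          (lam 0 + ∑ j, lam j.succ * ∑ k ∈ Finset.range N, (k ! : R) * α j ^ k)
        - lam ⬝ᵥ padeVector α M G := by
  have hform : (borel M G).eval 1 *
          (lam 0 + ∑ j, lam j.succ * ∑ k ∈ Finset.range N, (k ! : R) * α j ^ k)
        - lam ⬝ᵥ padeVector α M G =
      ∑ j, lam j.succ * ((borel M G).eval 1 * (∑ k ∈ Finset.range N, (k ! : R) * α j ^ k)
        - eulerMoment (α j) (divXSubOne (borel M G))) := by
    simp only [dotProduct, Fin.sum_univ_succ, padeVector_zero, padeVector_succ, mul_sub, mul_add,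
      Finset.sum_sub_distrib, Finset.mul_sum, mul_left_comm (lam _), mul_comm (lam 0)]
    ring
  rw [hform]
  refine Finset.dvd_sum fun j _ => Dvd.dvd.mul_left ?_ _
  rw [eval_borel_mul_sum_sub_eulerMoment]
  exact dvd_sub
    (Finset.dvd_sum fun k _ => factorial_mul_factorial_dvd_eulerMoment hdeg (hdvd j) k)
    ((Nat.cast_dvd_cast hN).trans (factorial_dvd_eulerMoment_X_pow_mul _ _ _))

/-- The polynomials `X ^ i * ∏ⱼ (X - αⱼ) ^ l`, whose Borel transforms are the Padé denominators. -/
noncomputable def auxPoly (α : Fin m → R) (l i : ℕ) : R[X] :=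
  X ^ i * ∏ j, (X - C (α j)) ^ l

theorem pow_dvd_auxPoly (α : Fin m → R) (l i : ℕ) (j : Fin m) :
    (X - C (α j)) ^ l ∣ auxPoly α l i :=
  (Finset.dvd_prod_of_mem _ (Finset.mem_univ j)).mul_left _

end Pade

section Nonvanishing

variable {R : Type*} [CommRing R] [IsDomain R] {m : ℕ}

theorem mul_le_natDegree_of_X_sub_C_pow_dvd {α : Fin m → R} (hinj : Function.Injective α) {l : ℕ}
    {p : R[X]} (hp : p ≠ 0) (hdvd : ∀ j, (X - C (α j)) ^ l ∣ p) : m * l ≤ p.natDegree := by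
  classical
  calc m * l = ∑ _j : Fin m, l := by simp
    _ ≤ ∑ j, p.roots.count (α j) := Finset.sum_le_sum fun j _ => by
        rw [count_roots]
        exact (le_rootMultiplicity_iff hp).mpr (hdvd j)
    _ = ∑ x ∈ univ.image α, p.roots.count x := by rw [Finset.sum_image hinj.injOn]
    _ ≤ ∑ x ∈ univ.image α ∪ p.roots.toFinset, p.roots.count x :=
        Finset.sum_le_sum_of_subset Finset.subset_union_left
    _ = p.roots.card := Multiset.sum_count_eq_card fun x hx =>
        Finset.mem_union_right _ (Multiset.mem_toFinset.mpr hx)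
    _ ≤ p.natDegree := card_roots' p

theorem laplace_injective [CharZero R] : Function.Injective (laplace : R[X] →ₗ[R] R[X]) :=
  (injective_iff_map_eq_zero _).mpr fun p hp => by
    ext n
    have h := congrArg (coeff · n) hp
    simpa [laplace, coeff_scaleCoeff, Nat.factorial_ne_zero] using h

theorem eq_zero_of_padeVector_eq_zero [CharZero R] {α : Fin m → R} (hα0 : ∀ j, α j ≠ 0)
    (hinj : Function.Injective α) {l : ℕ} {G : R[X]} (hdeg : G.natDegree ≤ m * (l + 1))
    (hdvd : ∀ j, (X - C (α j)) ^ l ∣ G) (hG : padeVector α (m * (l + 1)) G = 0) : G = 0 := by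
  set b := borel (m * (l + 1)) G with hb
  set q := divXSubOne b
  -- This recursion propagates the vanishing moments of `b` to `q`, whose Laplace transform then has
  -- more zeros than its degree allows.
  have hbq : X * q = q + b := by
    have h : b.eval 1 = 0 := congrFun hG 0
    have := X_sub_one_mul_divXSubOne b
    rw [h, C_0] at this
    linear_combination this
  have hmoment (j : Fin m) : ∀ k < l + 1, eulerMoment (α j) (X ^ k * q) = 0 := by
    intro k
    induction k with
    | zero =>
      rw [pow_zero, one_mul]
      exact fun _ => congrFun hG j.succ
    | succ k ih =>
      intro hk
      rw [pow_succ, mul_assoc, hbq, mul_add, map_add, ih (by lia),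
        eulerMoment_X_pow_mul_borel_eq_zero hdeg (hdvd j) (by lia), add_zero]
  have hlaplace (j : Fin m) : (X - C (α j)) ^ (l + 1) ∣ laplace q :=
    X_sub_C_pow_dvd_laplace (hα0 j) (hmoment j)
  have hq0 : q = 0 := by
    by_contra hq0
    have hle := mul_le_natDegree_of_X_sub_C_pow_dvd hinj
      ((map_ne_zero_iff _ laplace_injective).mpr hq0) hlaplace
    have hqb : q.natDegree + 1 = b.natDegree := by
      rw [show b = (X - C 1) * q by rw [C_1]; linear_combination -hbq,
        natDegree_mul (X_sub_C_ne_zero 1) hq0, natDegree_X_sub_C, add_comm]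
    have := natDegree_laplace_le q
    have := natDegree_borel_le (m * (l + 1)) G
    lia
  have hb0 : b = 0 := by simpa [hq0] using hbq.symm
  have := laplace_borel hdeg
  rw [← hb, hb0, map_zero, eq_comm] at this
  simpa [Nat.factorial_ne_zero] using this

theorem exists_dotProduct_apply_single_ne_zero {ι : Type*} [Fintype ι] [DecidableEq ι]
    {f : (ι → R) →ₗ[R] (ι → R)} (hf : Function.Injective f) {x : ι → R} (hx : x ≠ 0) :
    ∃ i, x ⬝ᵥ f (Pi.single i 1) ≠ 0 := by
  by_contra! h
  have hker : Matrix.vecMul x (LinearMap.toMatrix' f) = 0 := by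
    ext i
    simpa [Matrix.vecMul, dotProduct, LinearMap.toMatrix'_apply] using h i
  obtain ⟨y, hy0, hy⟩ := Matrix.exists_mulVec_eq_zero_iff.mpr
    (Matrix.exists_vecMul_eq_zero_iff.mp ⟨x, hx, hker⟩)
  rw [LinearMap.toMatrix'_mulVec] at hy
  exact hy0 ((map_eq_zero_iff f hf).mp hy)

theorem natDegree_auxPoly (α : Fin m → R) (l i : ℕ) :
    (auxPoly α l i).natDegree = i + m * l := by
  have hne (j : Fin m) : (X - C (α j)) ^ l ≠ 0 := pow_ne_zero _ (X_sub_C_ne_zero _)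
  rw [auxPoly, natDegree_mul (pow_ne_zero _ X_ne_zero) (prod_ne_zero_iff.mpr fun j _ => hne j),
    natDegree_prod _ _ fun j _ => hne j]
  simp

theorem natDegree_auxPoly_le (α : Fin m → R) (l : ℕ) (i : Fin (m + 1)) :
    (auxPoly α l i).natDegree ≤ m * (l + 1) := by
  rw [natDegree_auxPoly, mul_add, mul_one, add_comm]
  gcongr
  exact i.is_le

theorem exists_dotProduct_padeVector_ne_zero [CharZero R] {α : Fin m → R} (hα0 : ∀ j, α j ≠ 0)
    (hinj : Function.Injective α) (l : ℕ) {lam : Fin (m + 1) → R} (hlam : lam ≠ 0) :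
    ∃ i : Fin (m + 1), lam ⬝ᵥ padeVector α (m * (l + 1)) (auxPoly α l i) ≠ 0 := by
  classical
  let combine : (Fin (m + 1) → R) →ₗ[R] R[X] :=
    LinearMap.mulRight R (∏ j, (X - C (α j)) ^ l) ∘ₗ ofFn (m + 1)
  have hcombine (c) : combine c = ofFn (m + 1) c * ∏ j, (X - C (α j)) ^ l := rfl
  have hprod : ∏ j, (X - C (α j)) ^ l ≠ 0 :=
    prod_ne_zero_iff.mpr fun j _ => pow_ne_zero _ (X_sub_C_ne_zero _)
  have hinjective : Function.Injective (padeVector α (m * (l + 1)) ∘ₗ combine) :=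
    (injective_iff_map_eq_zero _).mpr fun c hc => by
      have hdeg : (combine c).natDegree ≤ m * (l + 1) := by
        have := ofFn_natDegree_lt (Nat.le_add_left 1 m) c
        have := natDegree_auxPoly α l 0
        rw [auxPoly, pow_zero, one_mul, zero_add] at this
        have := natDegree_mul_le (p := ofFn (m + 1) c) (q := ∏ j, (X - C (α j)) ^ l)
        rw [hcombine]
        lia
      have hzero := eq_zero_of_padeVector_eq_zero hα0 hinj hdeg
        (fun j => (Finset.dvd_prod_of_mem _ (Finset.mem_univ j)).mul_left _) hc
      exact (map_eq_zero_iff _ (injective_ofFn _)).mp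
        ((mul_eq_zero.mp hzero).resolve_right hprod)
  obtain ⟨i, hi⟩ := exists_dotProduct_apply_single_ne_zero hinjective hlam
  have hsingle : ofFn (m + 1) (Pi.single i 1) = (X ^ (i : ℕ) : R[X]) := by
    ext k
    rw [coeff_X_pow]
    rcases lt_or_ge k (m + 1) with hk | hk
    · simp [ofFn_coeff_eq_val_of_lt _ hk, Pi.single_apply, Fin.ext_iff]
    · rw [ofFn_coeff_eq_zero_of_ge _ hk, if_neg (by lia)]
  exact ⟨i, by rwa [LinearMap.comp_apply, hcombine, hsingle] at hi⟩

end Nonvanishing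

section Size

variable {R : Type*} [CommRing R] (f : AbsoluteValue R ℝ) {A : ℝ}

/-- The `ℓ¹` norm of a polynomial with respect to the absolute value `f` of its coefficients, with
weight `A ^ n` on the coefficient of `X ^ n`. It is submultiplicative and controls every linear
functional that is `O(A ^ n)` on `X ^ n`. -/
noncomputable def l1Norm (A : ℝ) (p : R[X]) : ℝ :=
  p.sum fun n c => f c * A ^ n

theorem l1Norm_eq_sum_of_support_subset {p : R[X]} {s : Finset ℕ} (hs : p.support ⊆ s) :
    l1Norm f A p = ∑ n ∈ s, f (p.coeff n) * A ^ n :=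
  sum_eq_of_subset _ (by simp) hs

theorem l1Norm_monomial (n : ℕ) (c : R) : l1Norm f A (monomial n c) = f c * A ^ n :=
  sum_monomial_index c _ (by simp)

theorem l1Norm_nonneg (hA : 0 ≤ A) (p : R[X]) : 0 ≤ l1Norm f A p :=
  Finset.sum_nonneg fun _ _ => mul_nonneg (f.nonneg _) (pow_nonneg hA _)

theorem l1Norm_add_le (hA : 0 ≤ A) (p q : R[X]) :
    l1Norm f A (p + q) ≤ l1Norm f A p + l1Norm f A q := by
  classical
  rw [l1Norm_eq_sum_of_support_subset f support_add,
    l1Norm_eq_sum_of_support_subset f Finset.subset_union_left,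
    l1Norm_eq_sum_of_support_subset f Finset.subset_union_right, ← Finset.sum_add_distrib]
  gcongr with n _
  rw [coeff_add, ← add_mul]
  gcongr
  exact f.add_le _ _

theorem l1Norm_sum_le (hA : 0 ≤ A) {ι : Type*} (s : Finset ι) (p : ι → R[X]) :
    l1Norm f A (∑ i ∈ s, p i) ≤ ∑ i ∈ s, l1Norm f A (p i) :=
  Finset.le_sum_of_subadditive _ (sum_zero_index _ : l1Norm f A 0 = 0).le (l1Norm_add_le f hA) s p

theorem l1Norm_mul_le (hA : 0 ≤ A) (p q : R[X]) :
    l1Norm f A (p * q) ≤ l1Norm f A p * l1Norm f A q := by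
  simp only [mul_eq_sum_sum, sum_def]
  calc _ ≤ ∑ i ∈ p.support, ∑ j ∈ q.support,
        l1Norm f A (monomial (i + j) (p.coeff i * q.coeff j)) :=
        (l1Norm_sum_le f hA _ _).trans (Finset.sum_le_sum fun i _ => l1Norm_sum_le f hA _ _)
    _ = ∑ i ∈ p.support, ∑ j ∈ q.support,
        f (p.coeff i) * A ^ i * (f (q.coeff j) * A ^ j) :=
        Finset.sum_congr rfl fun i _ => Finset.sum_congr rfl fun j _ => by
          rw [l1Norm_monomial, map_mul, pow_add, mul_mul_mul_comm]
    _ = l1Norm f A p * l1Norm f A q := (Finset.sum_mul_sum _ _ _ _).symm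

theorem l1Norm_X_pow [Nontrivial R] (n : ℕ) : l1Norm f A (X ^ n) = A ^ n := by
  rw [X_pow_eq_monomial, l1Norm_monomial, map_one, one_mul]

theorem l1Norm_prod_le [Nontrivial R] (hA : 0 ≤ A) {ι : Type*} (s : Finset ι) (p : ι → R[X]) :
    l1Norm f A (∏ i ∈ s, p i) ≤ ∏ i ∈ s, l1Norm f A (p i) := by
  classical
  induction s using Finset.induction_on with
  | empty => simpa using (l1Norm_X_pow f 0).le
  | insert i s hi ih =>
    rw [Finset.prod_insert hi, Finset.prod_insert hi]
    exact (l1Norm_mul_le f hA _ _).trans (mul_le_mul_of_nonneg_left ih (l1Norm_nonneg f hA _))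

theorem l1Norm_X_sub_C_le [Nontrivial R] (hA : 0 ≤ A) (a : R) :
    l1Norm f A (X - C a) ≤ A + f a := by
  rw [sub_eq_add_neg, ← C_neg]
  refine (l1Norm_add_le f hA _ _).trans_eq ?_
  rw [← pow_one X, l1Norm_X_pow, ← monomial_zero_left, l1Norm_monomial, f.map_neg]
  simp

theorem l1Norm_auxPoly_le [Nontrivial R] {m : ℕ} {α : Fin m → R} (hA : 0 ≤ A)
    (hα : ∀ j, f (α j) ≤ A) (l i : ℕ) :
    l1Norm f A (auxPoly α l i) ≤ A ^ i * (2 * A) ^ (m * l) := by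
  have hlinear (j : Fin m) : l1Norm f A ((X - C (α j)) ^ l) ≤ (2 * A) ^ l := by
    have h := l1Norm_prod_le f hA (Finset.range l) fun _ => X - C (α j)
    simp only [Finset.prod_const, Finset.card_range] at h
    refine h.trans (pow_le_pow_left₀ (l1Norm_nonneg f hA _) ?_ l)
    linarith [l1Norm_X_sub_C_le f hA (α j), hα j]
  calc l1Norm f A (auxPoly α l i)
      ≤ A ^ i * l1Norm f A (∏ j, (X - C (α j)) ^ l) :=
        (l1Norm_mul_le f hA _ _).trans_eq (by rw [l1Norm_X_pow])
    _ ≤ A ^ i * ∏ j : Fin m, l1Norm f A ((X - C (α j)) ^ l) := by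
        gcongr
        exact l1Norm_prod_le f hA _ _
    _ ≤ A ^ i * ∏ _j : Fin m, (2 * A) ^ l := by
        gcongr with j
        · exact fun j _ => l1Norm_nonneg f hA _
        · exact hlinear j
    _ = A ^ i * (2 * A) ^ (m * l) := by simp [pow_mul']

theorem apply_linearMap_le_mul_l1Norm {T : R[X] →ₗ[R] R} {M : ℕ} {w : ℝ}
    (hT : ∀ n ≤ M, f (T (X ^ n)) ≤ w * A ^ n) {p : R[X]} (hp : p.natDegree ≤ M) :
    f (T p) ≤ w * l1Norm f A p := by
  calc f (T p) = f (∑ n ∈ p.support, p.coeff n * T (X ^ n)) := by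
        conv_lhs => rw [p.as_sum_support_C_mul_X_pow]
        simp only [← smul_eq_C_mul, map_sum, map_smul, smul_eq_mul]
    _ ≤ ∑ n ∈ p.support, f (p.coeff n) * f (T (X ^ n)) :=
        (f.sum_le _ _).trans_eq (by simp only [map_mul])
    _ ≤ ∑ n ∈ p.support, f (p.coeff n) * (w * A ^ n) := by
        gcongr with n hn
        exact hT n ((le_natDegree_of_mem_supp n hn).trans hp)
    _ = w * l1Norm f A p := by
        rw [l1Norm, sum_def, Finset.mul_sum]
        simp only [mul_left_comm]

theorem sum_range_factorial_le (n : ℕ) : ∑ i ∈ Finset.range n, i ! ≤ n ! := by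
  induction n with
  | zero => simp
  | succ n ih =>
    rcases n.eq_zero_or_pos with rfl | hn
    · simp
    · rw [Finset.sum_range_succ, Nat.factorial_succ]
      nlinarith [n.factorial_pos]

theorem apply_eulerMoment_divXSubOne_X_pow_le [Nontrivial R] {a : R} (hA : 1 ≤ A) (ha : f a ≤ A)
    (n : ℕ) :
    f (eulerMoment a (divXSubOne (X ^ n))) ≤ n ! * A ^ n := by
  rw [divXSubOne_X_pow, map_sum]
  calc f (∑ i ∈ Finset.range n, eulerMoment a (X ^ i))
      ≤ ∑ i ∈ Finset.range n, f (i ! : R) * f a ^ i :=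
        (f.sum_le _ _).trans_eq (by simp only [eulerMoment_X_pow, map_mul, map_pow])
    _ ≤ ∑ i ∈ Finset.range n, (i ! : ℝ) * A ^ n := by
        gcongr with i hi
        · exact f.apply_nat_le_self _
        · exact (pow_le_pow_left₀ (f.nonneg a) ha i).trans
            (pow_le_pow_right₀ hA (Finset.mem_range.mp hi).le)
    _ ≤ n ! * A ^ n := by
        rw [← Finset.sum_mul]
        gcongr
        exact_mod_cast sum_range_factorial_le n

theorem borel_X_pow (M n : ℕ) :
    borel M (X ^ n : R[X]) = (M.descFactorial (M - n) : R) • X ^ n := by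
  ext i
  simp +contextual [borel, coeff_scaleCoeff, coeff_X_pow]

theorem apply_padeVector_le [Nontrivial R] {m : ℕ} {α : Fin m → R} (hA : 1 ≤ A)
    (hα : ∀ j, f (α j) ≤ A) {M : ℕ} {G : R[X]} (hG : G.natDegree ≤ M) (i : Fin (m + 1)) :
    f (padeVector α M G i) ≤ M ! * l1Norm f A G := by
  refine apply_linearMap_le_mul_l1Norm f (T := LinearMap.proj i ∘ₗ padeVector α M)
    (fun n hn => ?_) hG
  have hdesc : (n ! * M.descFactorial (M - n) : ℝ) = M ! := by
    have := Nat.factorial_mul_descFactorial (Nat.sub_le M n)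
    rw [Nat.sub_sub_self hn] at this
    exact_mod_cast this
  rw [← hdesc, mul_comm (n ! : ℝ), mul_assoc]
  refine Fin.cases ?_ (fun j => ?_) i
  · rw [LinearMap.comp_apply, LinearMap.proj_apply, padeVector_zero, borel_X_pow, eval_smul,
      eval_pow, eval_X, one_pow, smul_eq_mul, mul_one]
    refine (f.apply_nat_le_self _).trans (le_mul_of_one_le_right (Nat.cast_nonneg _) ?_)
    exact one_le_mul_of_one_le_of_one_le (by exact_mod_cast n.factorial_pos) (one_le_pow₀ hA)
  · rw [LinearMap.comp_apply, LinearMap.proj_apply, padeVector_succ, borel_X_pow, map_smul,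
      map_smul, smul_eq_mul, map_mul]
    gcongr
    · exact f.apply_nat_le_self _
    · exact apply_eulerMoment_divXSubOne_X_pow_le f hA (hα j) n

theorem apply_dotProduct_padeVector_auxPoly_le [IsDomain R] {m : ℕ} {α : Fin m → R} (hA : 1 ≤ A)
    (hα : ∀ j, f (α j) ≤ A) (lam : Fin (m + 1) → R) (l : ℕ) (i : Fin (m + 1)) :
    f (lam ⬝ᵥ padeVector α (m * (l + 1)) (auxPoly α l i)) ≤
      (∑ i, f (lam i)) * ((m * (l + 1))! * (A ^ m * (2 * A) ^ (m * l))) := by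
  have hA0 : 0 ≤ A := zero_le_one.trans hA
  rw [dotProduct, Finset.sum_mul]
  refine (f.sum_le _ _).trans (Finset.sum_le_sum fun k _ => ?_)
  rw [map_mul]
  refine mul_le_mul_of_nonneg_left ?_ (f.nonneg _)
  refine (apply_padeVector_le f hA hα (natDegree_auxPoly_le α l i) k).trans ?_
  gcongr
  refine (l1Norm_auxPoly_le f hA0 hα l i).trans ?_
  gcongr
  exact i.is_le

theorem exists_log_size_le (m : ℕ) {S A : ℝ} (hS : 1 ≤ S) (hA : 1 ≤ A) :
    ∃ C : ℝ, ∀ l : ℕ, 1 ≤ l →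
      Real.log (S * ((m * (l + 1))! * (A ^ m * (2 * A) ^ (m * l)))) ≤
        m * l * Real.log l + C * l := by
  refine ⟨Real.log S + m + 2 * m * Real.log (2 * (m + 1)) + m * Real.log A +
    m * Real.log (2 * A), fun l hl => ?_⟩
  have hl1 : (1 : ℝ) ≤ l := by exact_mod_cast hl
  have hfactorial : Real.log (m * (l + 1))! ≤
      m * (l + 1) * (Real.log (2 * (m + 1)) + Real.log l) := by
    have hbase : m * (l + 1) ≤ 2 * (m + 1) * l := by nlinarith
    have hpow : ((m * (l + 1))! : ℝ) ≤ (2 * (m + 1) * l) ^ (m * (l + 1)) := by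
      exact_mod_cast (Nat.factorial_le_pow _).trans (Nat.pow_le_pow_left hbase _)
    refine (Real.log_le_log (by positivity) hpow).trans_eq ?_
    rw [Real.log_pow, Real.log_mul (by positivity) (by positivity)]
    push_cast
    ring
  have hlogl : Real.log l ≤ l := Real.log_le_self (by positivity)
  have hlogS := Real.log_nonneg hS
  have hlogA : 0 ≤ m * Real.log A := mul_nonneg (Nat.cast_nonneg m) (Real.log_nonneg hA)
  have hlogm : 0 ≤ m * Real.log (2 * (m + 1)) :=
    mul_nonneg (Nat.cast_nonneg m) (Real.log_nonneg (by linarith [(m.cast_nonneg : (0 : ℝ) ≤ m)]))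
  rw [Real.log_mul (by positivity) (by positivity), Real.log_mul (by positivity) (by positivity),
    Real.log_mul (by positivity) (by positivity), Real.log_pow, Real.log_pow]
  push_cast
  nlinarith [mul_le_mul_of_nonneg_left hlogl (Nat.cast_nonneg (α := ℝ) m)]

end Size

section LocalBound

open Filter Topology

theorem pow_div_dvd_factorial {p : ℕ} (hp : 0 < p) (N : ℕ) : p ^ (N / p) ∣ N ! :=
  calc p ^ (N / p) ∣ (p !) ^ (N / p) := pow_dvd_pow_of_dvd (Nat.dvd_factorial hp le_rfl) _
    _ ∣ (p * (N / p))! := by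
        simpa [mul_comm] using
          Nat.prod_factorial_dvd_factorial_sum (Finset.range (N / p)) fun _ => p
    _ ∣ N ! := Nat.factorial_dvd_factorial (Nat.mul_div_le N p)

variable {R F : Type*} [CommRing R] [NormedField F] [IsUltrametricDist F]

theorem tendsto_factorial_zero {N : ℕ} (hN : 0 < N) (h : ‖(N : F)‖ < 1) :
    Tendsto (fun n : ℕ => (n ! : F)) atTop (𝓝 0) := by
  refine squeeze_zero_norm (fun n => ?_)
    ((tendsto_pow_atTop_nhds_zero_of_lt_one (norm_nonneg _) h).comp
      (Nat.tendsto_div_const_atTop hN.ne'))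
  obtain ⟨c, hc⟩ := pow_div_dvd_factorial hN n
  rw [hc, Nat.cast_mul, Nat.cast_pow, norm_mul, norm_pow]
  exact mul_le_of_le_one_right (pow_nonneg (norm_nonneg _) _)
    (IsUltrametricDist.norm_natCast_le_one F c)

theorem summable_factorial_mul_pow [CompleteSpace F] {N : ℕ} (hN : 0 < N) (h : ‖(N : F)‖ < 1)
    {x : F} (hx : ‖x‖ ≤ 1) : Summable fun n : ℕ => (n ! : F) * x ^ n := by
  refine NonarchimedeanAddGroup.summable_of_tendsto_cofinite_zero ?_
  rw [Nat.cofinite_eq_atTop]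
  refine squeeze_zero_norm (fun n => ?_) (tendsto_zero_iff_norm_tendsto_zero.mp
    (tendsto_factorial_zero hN h))
  rw [norm_mul, norm_pow]
  exact mul_le_of_le_one_right (norm_nonneg _) (pow_le_one₀ (norm_nonneg _) hx)

theorem norm_map_dotProduct_padeVector_le [CompleteSpace F] {ι : R →+* F} (hι : ∀ x, ‖ι x‖ ≤ 1)
    {N : ℕ} (hN : 0 < N) (hNι : ‖(N : F)‖ < 1) {m : ℕ} {α : Fin m → R} {M l : ℕ} {G : R[X]}
    (hdeg : G.natDegree ≤ M) (hdvd : ∀ j, (X - C (α j)) ^ l ∣ G) {lam : Fin (m + 1) → R}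
    (hform : ι (lam 0) + ∑ j, ι (lam j.succ) * ∑' n : ℕ, (n ! : F) * ι (α j) ^ n = 0) :
    ‖ι (lam ⬝ᵥ padeVector α M G)‖ ≤ ‖((M ! * l ! : ℕ) : F)‖ := by
  set form : ℕ → R := fun N =>
    lam 0 + ∑ j, lam j.succ * ∑ k ∈ Finset.range N, (k ! : R) * α j ^ k
  have hlim : Tendsto (fun N => ι (form N)) atTop (𝓝 0) := by
    rw [← hform]
    simp only [form, map_add, map_sum, map_mul, map_pow, map_natCast]
    exact tendsto_const_nhds.add (tendsto_finsetSum _ fun j _ => tendsto_const_nhds.mul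
      (summable_factorial_mul_pow hN hNι (hι (α j))).hasSum.tendsto_sum_nat)
  have hdiff : Tendsto (fun N => ι ((borel M G).eval 1 * form N - lam ⬝ᵥ padeVector α M G)) atTop
      (𝓝 (-ι (lam ⬝ᵥ padeVector α M G))) := by
    simpa using (hlim.const_mul (ι ((borel M G).eval 1))).sub_const (ι (lam ⬝ᵥ padeVector α M G))
  rw [← norm_neg]
  refine le_of_tendsto hdiff.norm ?_
  filter_upwards [eventually_ge_atTop (M ! * l !)] with N hN
  have hNfac : M ! * l ! ∣ N ! := Nat.dvd_factorial (by positivity) hN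
  obtain ⟨c, hc⟩ := factorial_mul_factorial_dvd_linearForm_sub hdeg hdvd hNfac lam
  rw [hc, map_mul, map_natCast, norm_mul]
  exact mul_le_of_le_one_right (norm_nonneg _) (hι c)

end LocalBound

section Places

variable {K : Type*} [Field K] [NumberField K]

theorem norm_algebraMap_ringOfIntegers_le_one (v : HeightOneSpectrum (𝓞 K)) (x : 𝓞 K) :
    ‖algebraMap (𝓞 K) (v.adicCompletion K) x‖ ≤ 1 :=
  FinitePlace.norm_le_one K v x

theorem dvd_of_forall_norm_le {x y : 𝓞 K} (hy : y ≠ 0)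
    (h : ∀ v : HeightOneSpectrum (𝓞 K), ‖algebraMap (𝓞 K) (v.adicCompletion K) x‖ ≤
      ‖algebraMap (𝓞 K) (v.adicCompletion K) y‖) : y ∣ x := by
  have hyK : (y : K) ≠ 0 := RingOfIntegers.coe_ne_zero_iff.mpr hy
  obtain ⟨c, hc⟩ := HeightOneSpectrum.mem_integers_of_valuation_le_one (R := 𝓞 K) K (x / y)
    fun v => by
      have hv := Valued.toNormedField.norm_le_iff.mp (h v)
      change Valued.v (((x : K) : v.adicCompletion K)) ≤
        Valued.v (((y : K) : v.adicCompletion K)) at hv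
      rw [v.valuedAdicCompletion_eq_valuation', v.valuedAdicCompletion_eq_valuation'] at hv
      rw [map_div₀]
      exact div_le_one_of_le₀ hv zero_le
  refine ⟨c, RingOfIntegers.coe_injective ?_⟩
  rw [map_mul, hc, mul_div_cancel₀ _ hyK]

theorem natCast_dvd_of_forall_norm_le {X D : ℕ} (hX : X ≠ 0) (hXD : X ∣ D) {x : 𝓞 K}
    (h : ∀ v : HeightOneSpectrum (𝓞 K), (X : 𝓞 K) ∈ v.asIdeal →
      ‖algebraMap (𝓞 K) (v.adicCompletion K) x‖ ≤ ‖(D : v.adicCompletion K)‖) :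
    (X : 𝓞 K) ∣ x := by
  refine dvd_of_forall_norm_le (Nat.cast_ne_zero.mpr hX) fun v => ?_
  by_cases hv : (X : 𝓞 K) ∈ v.asIdeal
  · obtain ⟨c, rfl⟩ := hXD
    refine (h v hv).trans ?_
    rw [Nat.cast_mul, norm_mul, map_natCast]
    exact mul_le_of_le_one_right (norm_nonneg _) (IsUltrametricDist.norm_natCast_le_one _ c)
  · exact (norm_algebraMap_ringOfIntegers_le_one v x).trans_eq
      ((FinitePlace.norm_eq_one_iff_notMem K v (X : 𝓞 K)).mpr hv).symm

theorem norm_map_dotProduct_padeVector_le_of_eulerF {m : ℕ} {lam : Fin (m + 1) → 𝓞 K}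
    {α : Fin m → 𝓞 K} {v : HeightOneSpectrum (𝓞 K)}
    (hform : algebraMap K (v.adicCompletion K) (lam 0 : K) +
      ∑ j, algebraMap K (v.adicCompletion K) (lam j.succ : K) * eulerF K v (α j) = 0)
    {M l : ℕ} {G : (𝓞 K)[X]} (hdeg : G.natDegree ≤ M) (hdvd : ∀ j, (X - C (α j)) ^ l ∣ G) :
    ‖algebraMap (𝓞 K) (v.adicCompletion K) (lam ⬝ᵥ padeVector α M G)‖ ≤
      ‖((M ! * l ! : ℕ) : v.adicCompletion K)‖ := by
  have hnorm : ‖(Ideal.absNorm v.asIdeal : v.adicCompletion K)‖ < 1 := by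
    have h := (FinitePlace.norm_lt_one_iff_mem K v _).mpr (Ideal.absNorm_mem v.asIdeal)
    rwa [map_natCast, map_natCast] at h
  exact norm_map_dotProduct_padeVector_le (norm_algebraMap_ringOfIntegers_le_one v)
    (zero_lt_one.trans (NumberField.HeightOneSpectrum.one_lt_absNorm v)) hnorm hdeg hdvd hform

theorem exists_natCast_le_norm_of_dvd {X : ℕ} {x : 𝓞 K} (hx : x ≠ 0) (hdvd : (X : 𝓞 K) ∣ x) :
    ∃ σ : K →+* ℂ, (X : ℝ) ≤ ‖σ (x : K)‖ := by
  obtain ⟨c, rfl⟩ := hdvd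
  obtain ⟨σ, hσ⟩ := exists_conjugate_one_le_norm (right_ne_zero_of_mul hx)
  refine ⟨σ, ?_⟩
  calc (X : ℝ) ≤ X * ‖σ (c : K)‖ := le_mul_of_one_le_right (Nat.cast_nonneg X) hσ
    _ = ‖σ ((X * c : 𝓞 K) : K)‖ := by simp

theorem exists_log_le_of_dvd_dotProduct_padeVector {m : ℕ} (lam : Fin (m + 1) → 𝓞 K)
    (α : Fin m → 𝓞 K) :
    ∃ C : ℝ, ∀ l : ℕ, 1 ≤ l → ∀ (i : Fin (m + 1)) (X : ℕ), X ≠ 0 →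
      lam ⬝ᵥ padeVector α (m * (l + 1)) (auxPoly α l i) ≠ 0 →
      (X : 𝓞 K) ∣ lam ⬝ᵥ padeVector α (m * (l + 1)) (auxPoly α l i) →
      Real.log X ≤ m * l * Real.log l + C * l := by
  set A : ℝ := 1 + ∑ j, house (α j : K)
  set S : ℝ := 1 + ∑ i, house (lam i : K)
  have hA1 : 1 ≤ A := le_add_of_nonneg_right (Finset.sum_nonneg fun _ _ => house_nonneg _)
  have hS1 : 1 ≤ S := le_add_of_nonneg_right (Finset.sum_nonneg fun _ _ => house_nonneg _)
  obtain ⟨C, hC⟩ := exists_log_size_le m hS1 hA1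
  refine ⟨C, fun l hl i X hX hne hdvd => le_trans ?_ (hC l hl)⟩
  obtain ⟨σ, hσ⟩ := exists_natCast_le_norm_of_dvd hne hdvd
  let f : AbsoluteValue (𝓞 K) ℝ := (place σ).comp (f := algebraMap (𝓞 K) K)
    RingOfIntegers.coe_injective
  have hα (j : Fin m) : f (α j) ≤ A :=
    ((norm_embedding_le_house _ σ).trans (Finset.single_le_sum
      (f := fun j => house (α j : K)) (fun _ _ => house_nonneg _) (Finset.mem_univ j))).trans
      (le_add_of_nonneg_left zero_le_one)
  have hlam : ∑ i, f (lam i) ≤ S :=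
    (Finset.sum_le_sum fun i _ => norm_embedding_le_house _ σ).trans
      (le_add_of_nonneg_left zero_le_one)
  refine Real.log_le_log (by positivity) (hσ.trans ?_)
  refine (apply_dotProduct_padeVector_auxPoly_le f hA1 hα lam l i).trans ?_
  gcongr

end Places

section Criterion

theorem prod_pow_dvd_factorial_mul_factorial {S : Finset ℕ} (hS : ∀ p ∈ S, p.Prime) (M l : ℕ) :
    ∏ p ∈ S, p ^ (M / p + l / p) ∣ M ! * l ! := by
  refine (Finset.prod_dvd_of_isRelPrime (fun p hp q hq hpq => ?_) fun p hp => ?_)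
  · exact Nat.coprime_iff_isRelPrime.mp
      (Nat.Coprime.pow _ _ ((Nat.coprime_primes (hS p hp) (hS q hq)).mpr hpq))
  · rw [pow_add]
    exact mul_dvd_mul (pow_div_dvd_factorial (hS p hp).pos M)
      (pow_div_dvd_factorial (hS p hp).pos l)

theorem mul_sum_log_div_sub_le_log_prod {S : Finset ℕ} {m M l : ℕ} (hS : S ⊆ Nat.primesLE l)
    (hM : m * l ≤ M) :
    (m + 1) * l * ∑ p ∈ S, Real.log p / p - 2 * Real.log 4 * l ≤
      Real.log (∏ p ∈ S, p ^ (M / p + l / p) : ℕ) := by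
  have hpos (p) (hp : p ∈ S) : 0 < p := (Nat.mem_primesLE.mp (hS hp)).2.pos
  have htheta : ∑ p ∈ S, Real.log p ≤ Real.log 4 * l :=
    calc ∑ p ∈ S, Real.log p ≤ ∑ p ∈ Nat.primesLE l, Real.log p :=
          Finset.sum_le_sum_of_subset_of_nonneg hS fun p _ _ => Real.log_natCast_nonneg p
      _ = Chebyshev.theta l := (Chebyshev.theta_eq_sum_primesLE_log l).symm
      _ ≤ Real.log 4 * l := Chebyshev.theta_le_log4_mul_x (Nat.cast_nonneg l)
  have hterm (p) (hp : p ∈ S) : (m + 1) * l * (Real.log p / p) - 2 * Real.log p ≤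
      (M / p + l / p : ℕ) * Real.log p := by
    have hp0 : (0 : ℝ) < p := Nat.cast_pos.mpr (hpos p hp)
    have hfloor (N : ℕ) : (N : ℝ) / p - 1 ≤ (N / p : ℕ) := by
      rw [← Nat.floor_div_eq_div (K := ℝ)]
      exact (Nat.sub_one_lt_floor _).le
    have hM' : (m : ℝ) * l / p ≤ M / p := by
      gcongr
      exact_mod_cast hM
    calc (m + 1) * l * (Real.log p / p) - 2 * Real.log p
        = (m * l / p - 1 + (l / p - 1)) * Real.log p := by ring
      _ ≤ (M / p + l / p : ℕ) * Real.log p := by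
          refine mul_le_mul_of_nonneg_right ?_ (Real.log_natCast_nonneg p)
          push_cast
          linarith [hfloor M, hfloor l]
  have hsum := Finset.sum_le_sum hterm
  rw [Finset.sum_sub_distrib, ← Finset.mul_sum, ← Finset.mul_sum] at hsum
  push_cast
  rw [Real.log_prod fun p hp => pow_ne_zero _ (Nat.cast_ne_zero.mpr (hpos p hp).ne')]
  simp only [Real.log_pow]
  linarith

variable {K : Type*} [Field K] [NumberField K]

open Classical in
theorem exists_sum_log_div_le_of_linearForm_eq_zero {m : ℕ} {lam : Fin (m + 1) → 𝓞 K}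
    (hlam : lam ≠ 0) {α : Fin m → 𝓞 K} (hα0 : ∀ j, α j ≠ 0) (hinj : Function.Injective α)
    {R : Set ℕ} (hform : ∀ v : HeightOneSpectrum (𝓞 K), (∃ p ∈ R, (p : 𝓞 K) ∈ v.asIdeal) →
      algebraMap K (v.adicCompletion K) (lam 0 : K) +
        ∑ j, algebraMap K (v.adicCompletion K) (lam j.succ : K) * eulerF K v (α j) = 0) :
    ∃ C : ℝ, ∀ l : ℕ,
      (m + 1) * ∑ p ∈ Nat.primesLE l with p ∈ R, Real.log p / p ≤ C + m * Real.log l := by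
  obtain ⟨C, hC⟩ := exists_log_le_of_dvd_dotProduct_padeVector lam α
  refine ⟨|C| + 2 * Real.log 4, fun l => ?_⟩
  rcases l.eq_zero_or_pos with rfl | hl
  · simpa using (by positivity : 0 ≤ |C| + 2 * Real.log 4)
  set S := {p ∈ Nat.primesLE l | p ∈ R}
  set M := m * (l + 1) with hM
  have hSprime (p) (hp : p ∈ S) : p.Prime := (Nat.mem_primesLE.mp (Finset.mem_filter.mp hp).1).2
  have hX : ∏ p ∈ S, p ^ (M / p + l / p) ≠ 0 :=
    prod_ne_zero_iff.mpr fun p hp => pow_ne_zero _ (hSprime p hp).ne_zero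
  obtain ⟨i, hi⟩ := exists_dotProduct_padeVector_ne_zero hα0 hinj l hlam
  have hdvd : ((∏ p ∈ S, p ^ (M / p + l / p) : ℕ) : 𝓞 K) ∣
      lam ⬝ᵥ padeVector α M (auxPoly α l i) := by
    refine natCast_dvd_of_forall_norm_le hX (prod_pow_dvd_factorial_mul_factorial hSprime M l)
      fun v hv => ?_
    push_cast at hv
    obtain ⟨p, hp, hpv⟩ := v.isPrime.prod_mem_iff.mp hv
    exact norm_map_dotProduct_padeVector_le_of_eulerF
      (hform v ⟨p, (Finset.mem_filter.mp hp).2, v.isPrime.mem_of_pow_mem _ hpv⟩)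
      (natDegree_auxPoly_le α l i) (pow_dvd_auxPoly α l i)
  have hlower := mul_sum_log_div_sub_le_log_prod (Finset.filter_subset (· ∈ R) (Nat.primesLE l))
    (show m * l ≤ M by rw [hM]; gcongr; lia)
  have hupper := hC l hl i _ hX hi hdvd
  have hl0 : (0 : ℝ) < l := Nat.cast_pos.mpr hl
  refine le_of_mul_le_mul_left ?_ hl0
  linarith [mul_le_mul_of_nonneg_right (le_abs_self C) hl0.le]

end Criterion

section Density

open ArithmeticFunction.vonMangoldt Filter Topology

/-- The weight `log p / p` on the primes `p` of `R`, zero elsewhere. The density of `R` is read off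
from the growth of `∑ primeWeight R k / k ^ s` as `s → 0⁺`. -/
noncomputable def primeWeight (R : Set ℕ) : ℕ → ℝ :=
  Set.indicator {p | p.Prime ∧ p ∈ R} fun p => Real.log p / p

theorem primeWeight_nonneg (R : Set ℕ) (k : ℕ) : 0 ≤ primeWeight R k :=
  Set.indicator_nonneg (fun p _ => div_nonneg (Real.log_natCast_nonneg p) p.cast_nonneg) k

theorem primeWeight_zero (R : Set ℕ) : primeWeight R 0 = 0 :=
  Set.indicator_of_notMem (fun h => Nat.not_prime_zero h.1) _

theorem primeWeight_le_primeWeight {R R' : Set ℕ} (h : ∀ p : ℕ, p.Prime → p ∈ R → p ∈ R') (k : ℕ) :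
    primeWeight R k ≤ primeWeight R' k :=
  Set.indicator_le_indicator_of_subset (fun p hp => And.intro hp.1 (h p hp.1 hp.2))
    (fun p => div_nonneg (Real.log_natCast_nonneg p) p.cast_nonneg) k

open Classical in
theorem sum_primeWeight_succ (R : Set ℕ) (N : ℕ) :
    ∑ k ∈ Finset.range N, primeWeight R (k + 1) =
      ∑ p ∈ Nat.primesLE N with p ∈ R, Real.log p / p := by
  have h := Finset.sum_range_succ' (primeWeight R) N
  rw [primeWeight_zero, add_zero] at h
  rw [← h, Nat.primesLE, Nat.primesBelow, Finset.sum_filter, Finset.sum_filter]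
  simp only [primeWeight, Set.indicator_apply, Set.mem_ofPred_eq, ite_and]

theorem primeWeight_setOf_mem {ι : Type*} (A : Finset ι) (c : ℕ → ι) (k : ℕ) :
    primeWeight {p | c p ∈ A} k = ∑ a ∈ A, primeWeight {p | c p = a} k := by
  classical
  by_cases hk : k.Prime <;> simp [primeWeight, Set.indicator_apply, hk]

theorem sum_mul_le_mul_of_antitone {h w : ℕ → ℝ} {C : ℝ} (hw : Antitone w) (hw0 : ∀ k, 0 ≤ w k)
    (hC : ∀ N, ∑ k ∈ Finset.range N, h k ≤ C) (N : ℕ) :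
    ∑ k ∈ Finset.range N, h k * w k ≤ C * w 0 := by
  suffices hstrong : ∑ k ∈ Finset.range N, h k * w k ≤
      C * w 0 - (C - ∑ k ∈ Finset.range N, h k) * w N from
    hstrong.trans (sub_le_self _ (mul_nonneg (sub_nonneg.mpr (hC N)) (hw0 N)))
  induction N with
  | zero => simp
  | succ N ih =>
    have hstep := mul_le_mul_of_nonneg_left (hw N.le_succ) (sub_nonneg.mpr (hC (N + 1)))
    rw [Finset.sum_range_succ] at hstep ⊢
    rw [Finset.sum_range_succ]
    linarith

theorem log_sub_log_mul_rpow_neg_le {x y s : ℝ} (hx : 0 < x) (hy : 0 < y) (hs : 0 < s) :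
    (Real.log y - Real.log x) * y ^ (-s) ≤ (x ^ (-s) - y ^ (-s)) / s := by
  have hratio : x ^ (-s) = y ^ (-s) * Real.exp (s * (Real.log y - Real.log x)) := by
    rw [Real.rpow_def_of_pos hx, Real.rpow_def_of_pos hy, ← Real.exp_add]
    ring_nf
  have hexp := mul_le_mul_of_nonneg_left
    (Real.add_one_le_exp (s * (Real.log y - Real.log x))) (Real.rpow_nonneg hy.le (-s))
  rw [le_div_iff₀ hs, hratio]
  linarith

theorem sum_log_succ_sub_log_mul_rpow_neg_le {s : ℝ} (hs : 0 < s) (N : ℕ) :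
    ∑ k ∈ Finset.range N, (Real.log ((k + 1 : ℕ) : ℝ) - Real.log k) * ((k + 1 : ℕ) : ℝ) ^ (-s) ≤
      1 / s := by
  cases N with
  | zero => simpa using hs.le
  | succ N =>
    rw [Finset.sum_range_succ']
    calc _ ≤ ∑ k ∈ Finset.range N,
          (((k + 1 : ℕ) : ℝ) ^ (-s) / s - ((k + 1 + 1 : ℕ) : ℝ) ^ (-s) / s) + 0 := by
          refine add_le_add (Finset.sum_le_sum fun k _ => ?_) (by simp)
          rw [← sub_div]
          exact log_sub_log_mul_rpow_neg_le (by positivity) (by positivity) hs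
      _ = 1 / s - ((N + 1 : ℕ) : ℝ) ^ (-s) / s := by
          rw [Finset.sum_range_sub' fun k : ℕ => ((k + 1 : ℕ) : ℝ) ^ (-s) / s]
          simp
      _ ≤ 1 / s := sub_le_self _ (by positivity)

theorem sum_mul_rpow_neg_le {f : ℕ → ℝ} {C d s : ℝ} (hd : 0 ≤ d) (hs : 0 < s)
    (hf : ∀ N : ℕ, ∑ k ∈ Finset.range N, f (k + 1) ≤ C + d * Real.log N) (N : ℕ) :
    ∑ k ∈ Finset.range N, f (k + 1) * ((k + 1 : ℕ) : ℝ) ^ (-s) ≤ C + d / s := by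
  have hanti : Antitone fun k : ℕ => ((k + 1 : ℕ) : ℝ) ^ (-s) := fun a b hab =>
    Real.rpow_le_rpow_of_nonpos (by positivity) (by gcongr) (neg_nonpos.mpr hs.le)
  have hC (N : ℕ) : ∑ k ∈ Finset.range N,
      (f (k + 1) - d * (Real.log ((k + 1 : ℕ) : ℝ) - Real.log k)) ≤ C := by
    rw [Finset.sum_sub_distrib, ← Finset.mul_sum,
      Finset.sum_range_sub fun k : ℕ => Real.log (k : ℝ), Nat.cast_zero, Real.log_zero, sub_zero]
    exact sub_le_iff_le_add.mpr (hf N)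
  have habel := sum_mul_le_mul_of_antitone hanti (fun k => by positivity) hC N
  have hlog := mul_le_mul_of_nonneg_left (sum_log_succ_sub_log_mul_rpow_neg_le hs N) hd
  simp only [sub_mul, Finset.sum_sub_distrib, mul_assoc, ← Finset.mul_sum, zero_add, Nat.cast_one,
    Real.one_rpow, mul_one] at habel hlog
  rw [mul_one_div] at hlog
  linarith

theorem residueClass_div_rpow_one_add {n : ℕ} (a : ZMod n) {s : ℝ} (k : ℕ) :
    residueClass a k / (k : ℝ) ^ (1 + s) = primeWeight {p | (p : ZMod n) = a} k * (k : ℝ) ^ (-s) +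
      (if k.Prime then 0 else residueClass a k) / (k : ℝ) ^ (1 + s) := by
  by_cases hk : k.Prime
  · have hk0 : (0 : ℝ) < k := Nat.cast_pos.mpr hk.pos
    rw [if_pos hk, zero_div, add_zero, Real.rpow_add hk0, Real.rpow_one, Real.rpow_neg hk0.le]
    by_cases hka : (k : ZMod n) = a
    · have hΛ : residueClass a k = Real.log k := by
        simp [residueClass, hka, ArithmeticFunction.vonMangoldt_apply_prime hk]
      have hweight : primeWeight {p | (p : ZMod n) = a} k = Real.log k / k := by
        simp [primeWeight, hk, hka]
      rw [hΛ, hweight]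
      ring
    · simp [residueClass, primeWeight, hka]
  · simp [primeWeight, hk]

theorem exists_le_tsum_primeWeight {n : ℕ} [NeZero n] {a : ZMod n} (ha : IsUnit a) :
    ∃ C : ℝ, ∀ s ∈ Set.Ioc (0 : ℝ) 1,
      Summable (fun k : ℕ => primeWeight {p | (p : ZMod n) = a} k * (k : ℝ) ^ (-s)) ∧
      (n.totient : ℝ)⁻¹ / s - C ≤
        ∑' k : ℕ, primeWeight {p | (p : ZMod n) = a} k * (k : ℝ) ^ (-s) := by
  obtain ⟨C, hC⟩ := LSeries_residueClass_lower_bound ha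
  have hprimePow := summable_residueClass_non_primes_div a
  refine ⟨C + ∑' k : ℕ, (if k.Prime then 0 else residueClass a k) / (k : ℝ), fun s hs => ?_⟩
  have hnonneg (k : ℕ) : 0 ≤ if k.Prime then 0 else residueClass a k := by
    split_ifs
    exacts [le_rfl, residueClass_nonneg a k]
  have hall : Summable fun k : ℕ => residueClass a k / (k : ℝ) ^ (1 + s) :=
    LSeries.summable_real_of_abscissaOfAbsConv_lt <|
      (abscissaOfAbsConv_residueClass_le_one a).trans_lt <| by
        exact_mod_cast lt_add_of_pos_right 1 hs.1
  have hsplit (k : ℕ) := residueClass_div_rpow_one_add a (s := s) k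
  have hprime : Summable fun k : ℕ =>
      primeWeight {p | (p : ZMod n) = a} k * (k : ℝ) ^ (-s) :=
    hall.of_nonneg_of_le (fun k => mul_nonneg (primeWeight_nonneg _ k) (by positivity)) fun k => by
      rw [hsplit k]
      exact le_add_of_nonneg_right (div_nonneg (hnonneg k) (by positivity))
  have hle (k : ℕ) : (if k.Prime then 0 else residueClass a k) / (k : ℝ) ^ (1 + s) ≤
      (if k.Prime then 0 else residueClass a k) / (k : ℝ) := by
    rcases k.eq_zero_or_pos with rfl | hk
    · simp
    · have hk1 : (1 : ℝ) ≤ k := Nat.one_le_cast.mpr hk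
      gcongr
      · exact hnonneg k
      · exact Real.self_le_rpow_of_one_le hk1 (by linarith [hs.1])
  have hbound := hC (x := 1 + s) ⟨by linarith [hs.1], by linarith [hs.2]⟩
  rw [add_sub_cancel_left] at hbound
  have htsum := hall.tsum_le_tsum
    (fun k => (hsplit k).trans_le (add_le_add_right (hle k) _)) (hprime.add hprimePow)
  rw [hprime.tsum_add hprimePow] at htsum
  exact ⟨hprime, by linarith⟩

theorem le_of_forall_div_le_add_div {c C d : ℝ}
    (h : ∀ s ∈ Set.Ioc (0 : ℝ) 1, c / s ≤ C + d / s) : c ≤ d := by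
  have hlim : Tendsto (fun s : ℝ => C * s + d) (𝓝[>] 0) (𝓝 d) := by
    have hcont : Continuous fun s : ℝ => C * s + d := by fun_prop
    simpa using (hcont.tendsto 0).mono_left nhdsWithin_le_nhds
  refine ge_of_tendsto hlim ?_
  filter_upwards [Ioc_mem_nhdsGT zero_lt_one] with s hs
  have hmul := mul_le_mul_of_nonneg_right (h s hs) hs.1.le
  rwa [add_mul, div_mul_cancel₀ _ hs.1.ne', div_mul_cancel₀ _ hs.1.ne'] at hmul

open Classical in
theorem card_div_totient_le_of_sum_log_div_le {n : ℕ} [NeZero n] {A : Finset (ZMod n)}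
    (hA : ∀ a ∈ A, IsUnit a) {R : Set ℕ} (hR : ∀ p : ℕ, p.Prime → (p : ZMod n) ∈ A → p ∈ R)
    {C d : ℝ} (hd : 0 ≤ d)
    (h : ∀ N : ℕ, ∑ p ∈ Nat.primesLE N with p ∈ R, Real.log p / p ≤ C + d * Real.log N) :
    (#A : ℝ) / n.totient ≤ d := by
  choose! B hB using fun a (ha : a ∈ A) => exists_le_tsum_primeWeight (hA a ha)
  refine le_of_forall_div_le_add_div (C := C + ∑ a ∈ A, B a) fun s hs => ?_
  set w : ℕ → ℝ := fun k => primeWeight {p : ℕ | (p : ZMod n) ∈ A} k * (k : ℝ) ^ (-s) with hw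
  have hwsum : w = fun k => ∑ a ∈ A, primeWeight {p | (p : ZMod n) = a} k * (k : ℝ) ^ (-s) :=
    funext fun k => by rw [← Finset.sum_mul, ← primeWeight_setOf_mem A fun p : ℕ => (p : ZMod n)]
  have hw0 (k : ℕ) : 0 ≤ w k := mul_nonneg (primeWeight_nonneg _ k) (by positivity)
  have hwR (k : ℕ) : w k ≤ primeWeight R k * (k : ℝ) ^ (-s) :=
    mul_le_mul_of_nonneg_right (primeWeight_le_primeWeight hR k) (by positivity)
  have hpartial (N : ℕ) : ∑ k ∈ Finset.range N, w k ≤ C + d / s :=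
    calc ∑ k ∈ Finset.range N, w k ≤ ∑ k ∈ Finset.range (N + 1), w k :=
          Finset.sum_le_sum_of_subset_of_nonneg (Finset.range_mono N.le_succ) fun k _ _ => hw0 k
      _ = ∑ k ∈ Finset.range N, w (k + 1) := by
          rw [Finset.sum_range_succ', show w 0 = 0 by simp [hw, primeWeight_zero], add_zero]
      _ ≤ ∑ k ∈ Finset.range N, primeWeight R (k + 1) * ((k + 1 : ℕ) : ℝ) ^ (-s) :=
          Finset.sum_le_sum fun k _ => hwR (k + 1)
      _ ≤ C + d / s :=
          sum_mul_rpow_neg_le hd hs.1 (fun N => (sum_primeWeight_succ R N).trans_le (h N)) N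
  have hlower : ∑ a ∈ A, ((n.totient : ℝ)⁻¹ / s - B a) ≤ ∑' k, w k := by
    rw [hwsum, Summable.tsum_finsetSum fun a ha => (hB a ha s hs).1]
    exact Finset.sum_le_sum fun a ha => (hB a ha s hs).2
  have hupper : ∑' k, w k ≤ C + d / s := Real.tsum_le_of_sum_range_le hw0 hpartial
  rw [Finset.sum_sub_distrib, Finset.sum_const, nsmul_eq_mul, ← mul_div_assoc,
    ← div_eq_mul_inv] at hlower
  linarith

end Density

end EulerSeries

/-- Theorem 3 of the paper, primes in residue classes: let `R` be
the set of primes lying in `r` reduced residue classes modulo `n ≥ 3`, where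
`r > m·φ(n)/(m+1)`, and let `V` be the places of `K` above primes of `R`.  Then some
`v' ∈ V` satisfies `λ₀ + λ₁ F_{v'}(α₁) + … + λ_m F_{v'}(α_m) ≠ 0`. -/
theorem euler_linear_form_residue_classes (K : Type*) [Field K] [NumberField K]
    {m : ℕ} (hm : 1 ≤ m)
    (lam : Fin (m + 1) → 𝓞 K) (hlam : ∃ i, lam i ≠ 0)
    (α : Fin m → 𝓞 K) (hα0 : ∀ j, α j ≠ 0) (hinj : Function.Injective α)
    (n : ℕ) (hn : 3 ≤ n)
    (A : Finset (ZMod n)) (hA : ∀ a ∈ A, IsUnit a)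
    (r : ℕ) (hr : A.card = r) (hrm : (m : ℝ) * (n.totient : ℝ) / ((m : ℝ) + 1) < (r : ℝ))
    (R : Set ℕ) (hR : R = {p : ℕ | p.Prime ∧ (p : ZMod n) ∈ A})
    (V : Set (HeightOneSpectrum (𝓞 K)))
    (hV : V = {v | ∃ p ∈ R, (p : 𝓞 K) ∈ v.asIdeal}) :
    ∃ v' ∈ V,
      algebraMap K (v'.adicCompletion K) ((lam 0 : K)) +
        ∑ j : Fin m, algebraMap K (v'.adicCompletion K) ((lam j.succ : K)) *
          eulerF K v' (α j) ≠ 0 := by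
  classical
  by_contra! hzero
  subst hV hr
  have : NeZero n := ⟨by lia⟩
  obtain ⟨C, hC⟩ := EulerSeries.exists_sum_log_div_le_of_linearForm_eq_zero
    (Function.ne_iff.mpr hlam) hα0 hinj hzero
  have hm1 : (0 : ℝ) < m + 1 := by positivity
  have hdensity : (#A : ℝ) / n.totient ≤ m / (m + 1) := by
    refine EulerSeries.card_div_totient_le_of_sum_log_div_le (R := R) (C := C / (m + 1)) hA
      (fun p hp hpA => hR ▸ ⟨hp, hpA⟩) (by positivity) fun N => ?_
    rw [div_mul_eq_mul_div, ← add_div, le_div_iff₀' hm1]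
    exact hC N
  have htotient : (0 : ℝ) < n.totient := Nat.cast_pos.mpr (Nat.totient_pos.mpr (by lia))
  rw [div_le_iff₀ htotient, div_mul_eq_mul_div] at hdensity
  exact hdensity.not_gt hrm
end
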